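/- arXiv:1504.06963 — 4 statements merged into one kernel-verified Lean document; each statement's English description precedes it below -/
import Mathlib

section
/- For Herman's protocol on a cycle of N ≥ 3 nodes started from any configuration x with an odd number of tokens, the expected stabilization time satisfies E(T) ≤ (4/27)·N². Moreover, equality holds if and only if N is divisible by 3 and x consists of exactly three tokens whose three arc-distances all equal N/3. -/
/-!
Configurations are encoded by spins on `Fin N`: a token sits at `v` when the spin at `v` differs from
the antiperiodic predecessor spin. A protocol step replaces each spin independently, with probability
`1 / 2`, by its predecessor (`tokens_sstep`). To a spin vector belongs the polynomial
`PP = tr (∏ U s_v X · flipM)` with unipotent `2 × 2` matrices `U`. Since the coins act on separate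
factors, the average of `PP` after a step is again a trace of an ordered product. Expanding it gives,
for the coefficients `F₁ = N`, `F₃`, `F₅` and the number `K` of tokens,

* `E(new F₃) = F₃ - (K - 1) N / 8` (`sum_F3`),
* `E(new F₅) ≥ F₅ - (K - 3) F₃ / 8` (`sum_F5`).

Moreover `24 F₃ < N ^ 3` (`PP_coeff3_le`). Hence the potential `V1 = (4 / N) (F₃ - 24 F₅ / N ^ 2)`
drops on average by at least one while `K ≥ 3`, and by strictly more than one if `K ≥ 5`, so that
`E T ≤ V1` (`ev_le`). For `K = 3` the simpler potential `V0 = 4 F₃ / N` drops by exactly one, whence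
`E T = 4 a b c / N` for arc-distances `a, b, c` (`expT_three`).

The sharp bound `V1 ≤ 4 N ^ 2 / 27` is the inequality `S ^ 2 F₃ - 24 F₅ ≤ S ^ 5 / 27` for cyclic
continuants of an odd number of nonnegative gaps with sum `S` (`fB_le`), proved by induction on the
number of gaps. If some window missing three consecutive gaps is heavy, then moving mass between the
two outer missing gaps does not decrease the left side at one of the ends, where a gap vanishes, its
neighbours merge, and the induction hypothesis applies (`fB_reduce`). If all windows are light, the
Euler identity `euler` bounds `F₃` directly (`light_big`, and `light_five` for five gaps). For three
gaps the inequality is the arithmetic-geometric mean inequality, whose equality case gives the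
characterisation of equality; one token gives `E T = 0`, and five or more tokens give a strict
inequality.
-/

open scoped BigOperators

namespace HermanProtocol

/-- One step of Herman's protocol on the cycle `ℤ/N` (modelled by `Fin N`),
given coin flips `c` : the token at node `v` moves to its clockwise neighbour
`v + 1` if `c v = true` and stays at `v` otherwise; if two tokens land on the
same node (at most two ever can), both are removed, so a node is occupied
afterwards iff exactly one token lands on it. -/
def step (N : ℕ) [NeZero N] (c : Fin N → Bool) (S : Finset (Fin N)) :
    Finset (Fin N) :=
  Finset.univ.filter fun w : Fin N =>
    (S.filter fun v => (if c v then v + 1 else v) = w).card = 1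

/-- The configuration `X_t` at time `t`, given the initial configuration `x`
and the coin flips `ω s v` (the coin used by the token sitting at node `v` at
time `s`); the tokens move independently since they sit at distinct nodes. -/
def conf (N : ℕ) [NeZero N] (x : Finset (Fin N)) (ω : ℕ → Fin N → Bool) :
    ℕ → Finset (Fin N)
  | 0 => x
  | t + 1 => step N (ω t) (conf N x ω t)

/-- Extend a finite coin history to an infinite one (by `false` after time `t`). -/
def pad (N t : ℕ) (ω : Fin t → Fin N → Bool) : ℕ → Fin N → Bool :=
  fun s => if h : s < t then ω ⟨s, h⟩ else fun _ => false

/-- `P(T > t)`: the probability (with all coins fair and independent) that the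
process has not yet reached a one-token state at time `t`.  Since `X_t` depends
only on the coins of the first `t` steps, this is a finite count. -/
noncomputable def survival (N : ℕ) [NeZero N] (x : Finset (Fin N)) (t : ℕ) : ℝ :=
  ((Finset.univ.filter fun ω : Fin t → Fin N → Bool =>
      (conf N x (pad N t ω) t).card ≠ 1).card : ℝ) / 2 ^ (t * N)

/-- The expected stabilization time `E(T) = ∑_{t ≥ 0} P(T > t)`, where
`T = min {t | K_t = 1}` is the hitting time of a one-token state. -/
noncomputable def expT (N : ℕ) [NeZero N] (x : Finset (Fin N)) : ℝ :=
  ∑' t : ℕ, survival N x t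

/-- `x` is a three-token configuration whose three arc-distances all equal
`N/3` (in particular `3 ∣ N`). -/
def Equidistant3 (N : ℕ) (x : Finset (Fin N)) : Prop :=
  3 ∣ N ∧ ∃ p₁ p₂ p₃ : Fin N, p₁ < p₂ ∧ p₂ < p₃ ∧ x = {p₁, p₂, p₃} ∧
    p₂.val - p₁.val = N / 3 ∧ p₃.val - p₂.val = N / 3 ∧
    N - (p₃.val - p₁.val) = N / 3

section Proof
open Polynomial

/-! ### Transfer matrices of spin chains -/

/-- Two by two matrices over real polynomials; all statistics are read off traces of products. -/
abbrev Mat := Matrix (Fin 2) (Fin 2) ℝ[X]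

/-- The nilpotent matrix attached to a spin: strictly upper for `true`, strictly lower for
`false`. -/
noncomputable def Y (s : Bool) : Mat := if s then !![0, 1; 0, 0] else !![0, 0; 1, 0]
/-- The permutation matrix implementing the antiperiodic boundary condition. -/
noncomputable def flipM : Mat := !![0, 1; 1, 0]
/-- The half step `X / 2`. -/
noncomputable def y : ℝ[X] := C (1/2) * X
/-- The unipotent transfer matrix `1 + w • Y s` of a single edge. -/
noncomputable def U (s : Bool) (w : ℝ[X]) : Mat := if s then !![1, w; 0, 1] else !![1, 0; w, 1]
/-- The diagonal matrix `diag (1, -1)`, used to telescope boundary terms. -/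
noncomputable def Zm : Mat := !![1, 0; 0, -1]
/-- The sign of a spin. -/
noncomputable def sg (s : Bool) : ℝ[X] := if s then 1 else -1

/-- The Euler operator `X d/dX`, entrywise. -/
noncomputable def theta (A : Mat) : Mat := A.map (fun p => X * derivative p)

theorem theta_mul (A B : Mat) : theta (A * B) = theta A * B + A * theta B := by
  ext i j : 1
  simp only [theta, Matrix.mul_apply, Matrix.map_apply, Matrix.add_apply, Fin.sum_univ_two,
    derivative_add, derivative_mul]
  ring

/-- The chain of half-step pairs `U s_{v-1} y * U s_v y`, which telescopes to the transfer
product. -/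
noncomputable def chW : Bool → List Bool → Mat
  | _, [] => 1
  | s, t :: L => U s y * U t y * chW t L

/-- The chain of averaged factors: `1 + y • (Y s + Y t)` is the mean of `U s X` and `U t X`. -/
noncomputable def chV : Bool → List Bool → Mat
  | _, [] => 1
  | s, t :: L => (1 + y • (Y s + Y t)) * chV t L

/-- The part of `chW` in which exactly one factor is replaced by `Y s_{v-1} * Y s_v`. -/
noncomputable def chI : Bool → List Bool → Mat
  | _, [] => 0
  | s, t :: L => Y s * Y t * chW t L + U s y * U t y * chI t L

/-- The remainder, with nonnegative coefficients, after extracting orders zero and one of `chV`. -/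
noncomputable def chR : Bool → List Bool → Mat
  | _, [] => 0
  | s, t :: L => (1 + y • (Y s + Y t)) * chR t L + Y s * Y t * chI t L

/-- The number of spin changes along a chain that starts at `s`. -/
def chK : Bool → List Bool → ℕ
  | _, [] => 0
  | s, t :: L => (if s = t then 0 else 1) + chK t L

theorem fac (s t : Bool) : (1 + y • (Y s + Y t)) = U s y * U t y - y^2 • (Y s * Y t) := by
  cases s <;> cases t <;> ext i j : 1 <;> fin_cases i <;> fin_cases j <;>
    simp [Y, U, Matrix.mul_apply, Fin.sum_univ_two] <;> ring

/-- Expansion of the averaged chain to second order in the correction `y ^ 2 • (Y s * Y t)` of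
`fac`. -/
theorem chV_eq (s : Bool) (L : List Bool) :
    chV s L = chW s L - y^2 • chI s L + y^4 • chR s L := by
  induction L generalizing s with
  | nil => simp [chV, chW, chI, chR]
  | cons t L ih =>
    simp only [chV, chW, chI, chR, ih t, fac]
    simp only [mul_add, mul_sub, sub_mul, add_mul, smul_add, smul_sub, Matrix.smul_mul, Matrix.mul_smul,
      smul_smul, Matrix.mul_assoc]
    module

/-- Local form of `chI_eq`: the insertion `Y s * Y t` equals token count minus Euler operator, up
to terms in `Zm` that telescope along the chain. -/
theorem Iloc (s t : Bool) : (4 : ℝ[X]) • (Y s * Y t) + sg t • (U s y * U t y * Zm)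
    = (2 * (if s = t then (0:ℝ[X]) else 1)) • (U s y * U t y) - (2 : ℝ[X]) • theta (U s y * U t y)
      + sg s • (Zm * (U s y * U t y)) := by
  cases s <;> cases t <;> ext i j : 1 <;> fin_cases i <;> fin_cases j <;>
    simp [Y, U, theta, sg, Zm, y] <;> ring

/-- The first-order term counts spin changes minus the degree, up to boundary terms. -/
theorem chI_eq (s : Bool) (L : List Bool) :
    (4 : ℝ[X]) • chI s L = (2 * (chK s L : ℝ[X])) • chW s L - (2 : ℝ[X]) • theta (chW s L)
      + sg s • (Zm * chW s L) - sg (L.getLastD s) • (chW s L * Zm) := by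
  induction L generalizing s with
  | nil =>
    have : theta (1 : Mat) = 0 := by
      ext i j : 1; fin_cases i <;> fin_cases j <;> simp [theta]
    simp [chI, chW, chK, this]
  | cons t L ih =>
    have h1 := congrArg (fun A => A * chW t L) (Iloc s t)
    have h2 := congrArg (fun A => U s y * U t y * A) (ih t)
    simp only [chI, chW, chK, theta_mul (U s y * U t y), List.getLastD_cons]
    simp only [add_mul, sub_mul, mul_add, mul_sub, Matrix.smul_mul, Matrix.mul_smul] at h1 h2
    have e : (((if s = t then 0 else 1) + chK t L : ℕ) : ℝ[X]) =
      (if s = t then (0:ℝ[X]) else 1) + (chK t L : ℝ[X]) := by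
      push_cast; rfl
    rw [e]
    simp only [Matrix.mul_assoc] at h1 h2 ⊢
    generalize (if s = t then (0:ℝ[X]) else 1) = k at *
    simp only [smul_add]
    rw [h2]
    rw [← sub_eq_zero] at h1 ⊢
    rw [← h1]
    module

/-- The transfer product of a spin list. -/
noncomputable def PM (L : List Bool) : Mat := (L.map (fun s => U s X)).prod
/-- The generating polynomial of a spin list; its odd coefficients are the statistics `F₁, F₃, F₅,
…`. -/
noncomputable def PP (L : List Bool) : ℝ[X] := (PM L * flipM).trace

theorem half_sq (s : Bool) : U s X = U s y * U s y := by
  have h : (X : ℝ[X]) = y + y := by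
    rw [y, ← add_mul, ← C_add]; norm_num
  cases s <;> ext i j : 1 <;> fin_cases i <;> fin_cases j <;> simp [U] <;> exact h

/-- The chain `chW` is the transfer product conjugated by half steps. -/
theorem chW_close (s : Bool) (L : List Bool) :
    U s y * PM L = chW s L * U (L.getLastD s) y := by
  induction L generalizing s with
  | nil => simp [PM, chW]
  | cons t L ih =>
    have := ih t
    simp only [PM, List.map_cons, List.prod_cons, chW, List.getLastD_cons] at *
    rw [half_sq, Matrix.mul_assoc (U s y * U t y), ← this]
    simp only [Matrix.mul_assoc]

theorem U_inv (s : Bool) : U s y * U s (-y) = 1 := by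
  cases s <;> ext i j : 1 <;> fin_cases i <;> fin_cases j <;> simp [U]

theorem U_flip (s : Bool) : U (!s) (-y) * flipM = flipM * U s (-y) := by
  cases s <;> ext i j : 1 <;> fin_cases i <;> fin_cases j <;> simp [U, flipM]

theorem trW (s : Bool) (L : List Bool) (h : L.getLastD s = !s) :
    (chW s L * flipM).trace = PP L := by
  have h1 := congrArg (fun A => A * U (!s) (-y)) (chW_close s L)
  simp only [h, Matrix.mul_assoc, U_inv, Matrix.mul_one] at h1
  rw [← h1, PP]
  have : U s y * (PM L * U (!s) (-y)) * flipM = U s y * (PM L * flipM * U s (-y)) := by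
    simp only [Matrix.mul_assoc, U_flip]
  rw [this, Matrix.trace_mul_comm]
  have h2 : U s (-y) * U s y = 1 := by
    have := U_inv s
    exact mul_eq_one_comm.mp this
  rw [Matrix.mul_assoc, h2, Matrix.mul_one]

/-- With antiperiodic closure the boundary terms of `chI_eq` cancel under the trace. -/
theorem trI (s : Bool) (L : List Bool) (h : L.getLastD s = !s) :
    2 * (chI s L * flipM).trace = (chK s L : ℝ[X]) * PP L - X * derivative (PP L) := by
  have h1 := congrArg (fun A : Mat => (A * flipM).trace) (chI_eq s L)
  have hs : sg (!s) = - sg s := by cases s <;> simp [sg]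
  have hz : (chW s L * Zm * flipM).trace = - (Zm * chW s L * flipM).trace := by
    have : Zm * flipM = - (flipM * Zm) := by
      ext i j : 1 <;> fin_cases i <;> fin_cases j <;> simp [Zm, flipM]
    rw [Matrix.mul_assoc, this, Matrix.mul_neg, Matrix.trace_neg, ← Matrix.mul_assoc,
      Matrix.trace_mul_comm, ← Matrix.mul_assoc]
  have ht : (theta (chW s L) * flipM).trace = X * derivative (PP L) := by
    rw [← trW s L h]
    simp [Matrix.trace, theta, Fin.sum_univ_two, flipM, Matrix.mul_apply]
    ring
  simp only [add_mul, sub_mul, Matrix.smul_mul, Matrix.trace_add, Matrix.trace_sub,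
    Matrix.trace_smul, h, hs, hz, ht, trW s L h, smul_eq_mul] at h1
  have h4 : (2 : ℝ[X]) * (2 * (chI s L * flipM).trace) = 2 * ((chK s L : ℝ[X]) * PP L - X * derivative (PP L)) := by
    linear_combination h1
  exact mul_left_cancel₀ two_ne_zero h4

/-- All coefficients of the polynomial are nonnegative. -/
def NN (p : ℝ[X]) : Prop := ∀ n, 0 ≤ p.coeff n

theorem NN.add {p q : ℝ[X]} (hp : NN p) (hq : NN q) : NN (p + q) := fun n => by
  rw [coeff_add]; exact add_nonneg (hp n) (hq n)
theorem NN.mul {p q : ℝ[X]} (hp : NN p) (hq : NN q) : NN (p * q) := fun n => by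
  rw [coeff_mul]; exact Finset.sum_nonneg fun x _ => mul_nonneg (hp _) (hq _)
theorem NN.zero : NN 0 := fun n => by simp
theorem NN.one : NN 1 := fun n => by rw [coeff_one]; split_ifs <;> norm_num
theorem NN.X : NN X := fun n => by rw [coeff_X]; split_ifs <;> norm_num
theorem NN.C {a : ℝ} (h : 0 ≤ a) : NN (C a) := fun n => by rw [coeff_C]; split_ifs <;> simp [h]
theorem NN.y : NN y := (NN.C (by norm_num)).mul NN.X

/-- All entries have nonnegative coefficients. -/
def MN (A : Mat) : Prop := ∀ i j, NN (A i j)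
theorem MN.add {A B : Mat} (hA : MN A) (hB : MN B) : MN (A + B) := fun i j => (hA i j).add (hB i j)
theorem MN.mul {A B : Mat} (hA : MN A) (hB : MN B) : MN (A * B) := fun i j => by
  rw [Matrix.mul_apply, Fin.sum_univ_two]
  exact ((hA _ _).mul (hB _ _)).add ((hA _ _).mul (hB _ _))
theorem MN.smul {p : ℝ[X]} {A : Mat} (hp : NN p) (hA : MN A) : MN (p • A) := fun i j =>
  hp.mul (hA i j)
theorem MN.zero : MN 0 := fun _ _ => NN.zero
theorem MN.of {a b c d : ℝ[X]} (ha : NN a) (hb : NN b) (hc : NN c) (hd : NN d) :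
    MN !![a, b; c, d] := fun i j => by
  fin_cases i <;> fin_cases j <;> simpa
theorem MN.one : MN 1 := by
  rw [Matrix.one_fin_two]; exact MN.of NN.one NN.zero NN.zero NN.one
theorem MN.U {w : ℝ[X]} (s : Bool) (hw : NN w) : MN (U s w) := by
  cases s
  · exact MN.of NN.one NN.zero hw NN.one
  · exact MN.of NN.one hw NN.zero NN.one
theorem MN.Y (s : Bool) : MN (Y s) := by
  cases s
  · exact MN.of NN.zero NN.zero NN.one NN.zero
  · exact MN.of NN.zero NN.one NN.zero NN.zero
theorem MN.flipM : MN flipM := MN.of NN.zero NN.one NN.one NN.zero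
theorem MN.trace {A : Mat} (hA : MN A) : NN A.trace := by
  rw [Matrix.trace, Fin.sum_univ_two]; exact (hA 0 0).add (hA 1 1)

theorem MN.chW (s : Bool) (L : List Bool) : MN (chW s L) := by
  induction L generalizing s with
  | nil => exact MN.one
  | cons t L ih =>
    exact ((MN.U s NN.y).mul (MN.U t NN.y)).mul (ih t)
theorem MN.chI (s : Bool) (L : List Bool) : MN (chI s L) := by
  induction L generalizing s with
  | nil => exact MN.zero
  | cons t L ih =>
    exact (((MN.Y s).mul (MN.Y t)).mul (MN.chW t L)).add
      (((MN.U s NN.y).mul (MN.U t NN.y)).mul (ih t))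
theorem MN.chR (s : Bool) (L : List Bool) : MN (chR s L) := by
  induction L generalizing s with
  | nil => exact MN.zero
  | cons t L ih =>
    exact ((MN.one.add (((MN.Y s).add (MN.Y t)).smul NN.y)).mul (ih t)).add
      (((MN.Y s).mul (MN.Y t)).mul (MN.chI t L))

/-- Average of the coefficients of `PP` after one step, with an explicit remainder of nonnegative
sign. -/
theorem chV_trace (s : Bool) (L : List Bool) (h : L.getLastD s = !s) (n : ℕ) :
    (chV s L * flipM).trace.coeff (n + 2) = (PP L).coeff (n + 2)
      - ((chK s L : ℝ) - n) / 8 * (PP L).coeff n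
      + (X ^ 2 * C (1 / 16) * (chR s L * flipM).trace).coeff n := by
  have hI : (chI s L * flipM).trace.coeff n = ((chK s L : ℝ) - n) / 2 * (PP L).coeff n := by
    have := congrArg (fun p : ℝ[X] => p.coeff n) (trI s L h)
    rw [show (2 : ℝ[X]) = C 2 from rfl, ← C_eq_natCast] at this
    cases n with
    | zero => simp at this ⊢; linarith
    | succ k =>
      simp [coeff_X_mul, coeff_derivative] at this ⊢; linarith
  have hy2 : y ^ 2 = C (1 / 4) * X ^ 2 := by
    rw [y, mul_pow, ← C_pow]; norm_num
  have hy4 : y ^ 4 = C (1 / 16) * X ^ 2 * X ^ 2 := by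
    rw [y, mul_pow, ← C_pow]; norm_num; ring
  rw [chV_eq, add_mul, sub_mul, Matrix.trace_add, Matrix.trace_sub, trW s L h, Matrix.smul_mul,
    Matrix.smul_mul, Matrix.trace_smul, Matrix.trace_smul, smul_eq_mul, smul_eq_mul, coeff_add,
    coeff_sub, hy2, hy4,
    show C (1 / 4) * X ^ 2 * (chI s L * flipM).trace = C (1 / 4) * (chI s L * flipM).trace * X ^ 2 by ring,
    show C (1 / 16) * X ^ 2 * X ^ 2 * (chR s L * flipM).trace =
      X ^ 2 * C (1 / 16) * (chR s L * flipM).trace * X ^ 2 by ring,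
    coeff_mul_X_pow, coeff_mul_X_pow, coeff_C_mul, hI]
  ring

theorem chV_coeff3 (s : Bool) (L : List Bool) (h : L.getLastD s = !s) :
    (chV s L * flipM).trace.coeff 3 =
      (PP L).coeff 3 - ((chK s L : ℝ) - 1) / 8 * (PP L).coeff 1 := by
  rw [chV_trace s L h 1, mul_assoc, coeff_X_pow_mul']
  simp

theorem chV_coeff5 (s : Bool) (L : List Bool) (h : L.getLastD s = !s) :
      (PP L).coeff 5 - ((chK s L : ℝ) - 3) / 8 * (PP L).coeff 3 ≤
    (chV s L * flipM).trace.coeff 5 := by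
  rw [chV_trace s L h 3]
  have : NN (X ^ 2 * C (1 / 16) * (chR s L * flipM).trace) := by
    rw [pow_two]
    exact (((NN.X.mul NN.X)).mul (NN.C (by norm_num))).mul ((MN.chR s L).mul MN.flipM).trace
  have := this 3
  push_cast
  linarith

/-! ### The total mass bound on the cubic statistic -/

theorem PM_cons_true (L : List Bool) (j : Fin 2) :
    PM (true :: L) 0 j = PM L 0 j + X * PM L 1 j ∧ PM (true :: L) 1 j = PM L 1 j := by
  simp [PM, U, Matrix.mul_apply, Fin.sum_univ_two]

theorem PM_cons_false (L : List Bool) (j : Fin 2) :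
    PM (false :: L) 1 j = X * PM L 0 j + PM L 1 j ∧ PM (false :: L) 0 j = PM L 0 j := by
  simp [PM, U, Matrix.mul_apply, Fin.sum_univ_two]

/-- A sum of shifted squares along the walk `c ↦ c ± 1`; choosing the initial value `c` suitably
exhibits the defect `N ^ 3 - 24 F₃` as `12 * psi`. -/
noncomputable def psi : ℝ → List Bool → ℝ
  | _, [] => 0
  | c, true :: L => (c ^ 2 + c + 1 / 3) + psi (c + 1) L
  | c, false :: L => (c ^ 2 - c + 1 / 3) + psi (c - 1) L

theorem psi_ge (c : ℝ) (L : List Bool) : (L.length : ℝ) / 12 ≤ psi c L := by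
  induction L generalizing c with
  | nil => simp [psi]
  | cons s L ih =>
    cases s
    · have := ih (c - 1)
      simp only [psi, List.length_cons]; push_cast
      nlinarith [sq_nonneg (c - 1 / 2)]
    · have := ih (c + 1)
      simp only [psi, List.length_cons]; push_cast
      nlinarith [sq_nonneg (c + 1 / 2)]

theorem PM_low (L : List Bool) : (PM L 0 0).coeff 0 = 1 ∧ (PM L 1 1).coeff 0 = 1 ∧
    (PM L 0 1).coeff 1 + (PM L 1 0).coeff 1 = L.length := by
  induction L with
  | nil => simp [PM, coeff_one]
  | cons s L ih =>
    obtain ⟨h1, h2, h3⟩ := ih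
    cases s
    · simp [PM_cons_false, h1, h2, coeff_X_mul]; linarith
    · simp [PM_cons_true, h1, h2, coeff_X_mul]; linarith

theorem PM_low2 (L : List Bool) : (PM L 0 0).coeff 2 + (PM L 1 1).coeff 2 =
    (PM L 0 1).coeff 1 * (PM L 1 0).coeff 1 := by
  induction L with
  | nil => simp [PM, coeff_one]
  | cons s L ih =>
    obtain ⟨h1, h2, -⟩ := PM_low L
    cases s
    · simp [PM_cons_false, h1, coeff_X_mul]; linear_combination ih
    · simp [PM_cons_true, h2, coeff_X_mul]; linear_combination ih

theorem psi_eq (c : ℝ) (L : List Bool) :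
    12 * psi c L = (L.length : ℝ) ^ 3 - 24 * ((PM L 0 1).coeff 3 + (PM L 1 0).coeff 3)
      - 3 * L.length * ((PM L 0 1).coeff 1 - (PM L 1 0).coeff 1) ^ 2
      + (6 * ((PM L 0 1).coeff 1 - (PM L 1 0).coeff 1) + 12 * c) *
        (L.length * ((PM L 0 1).coeff 1 - (PM L 1 0).coeff 1) +
          2 * ((PM L 0 0).coeff 2 - (PM L 1 1).coeff 2))
      + 12 * c ^ 2 * L.length := by
  induction L generalizing c with
  | nil => simp [PM, psi, coeff_one]
  | cons s L ih =>
    obtain ⟨h1, h2, h3⟩ := PM_low L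
    cases s
    · simp only [psi, mul_add, ih, PM_cons_false, h1, h2, coeff_X_mul, coeff_add, List.length_cons]
      push_cast
      rw [← h3]
      linear_combination 12 * PM_low2 L
    · simp only [psi, mul_add, ih, PM_cons_true, h1, h2, coeff_X_mul, coeff_add, List.length_cons]
      push_cast
      rw [← h3]
      linear_combination 12 * PM_low2 L

theorem PP_eq (L : List Bool) : PP L = PM L 0 1 + PM L 1 0 := by
  simp [PP, Matrix.trace, Fin.sum_univ_two, flipM, Matrix.mul_apply]

theorem PP_coeff1 (L : List Bool) : (PP L).coeff 1 = L.length := by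
  rw [PP_eq, coeff_add]; exact (PM_low L).2.2

/-- The cubic statistic is at most `(N ^ 3 - N) / 24`: take in `psi_eq` the start `c` that cancels
the mixed term. -/
theorem PP_coeff3_le (L : List Bool) :
    24 * (PP L).coeff 3 ≤ (L.length : ℝ) ^ 3 - L.length := by
  have h1 := psi_eq (-((PM L 0 1).coeff 1 - (PM L 1 0).coeff 1) / 2) L
  have h2 := psi_ge (-((PM L 0 1).coeff 1 - (PM L 1 0).coeff 1) / 2) L
  rw [PP_eq, coeff_add]
  linarith

/-! ### Cyclic products of gap matrices -/

/-- The continuant matrix of a gap `a`. -/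
noncomputable def Cm (a : ℝ) : Mat := !![C a * X, 1; 1, 0]
/-- The cyclic continuant polynomial of a list of gaps. -/
noncomputable def trC (L : List ℝ) : ℝ[X] := (L.map Cm).prod.trace

/-- The product of the gap matrices over the window of length `l` starting at `a`. -/
noncomputable def win (g : ℕ → ℝ) (a : ℕ) : ℕ → Mat
  | 0 => 1
  | l + 1 => win g a l * Cm (g (a + l))

theorem win_list (g : ℕ → ℝ) (a l : ℕ) :
    ((List.range l).map (fun i => Cm (g (a + i)))).prod = win g a l := by
  induction l with
  | zero => simp [win]
  | succ l ih => simp [List.range_succ, ih, win]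

theorem win_add (g : ℕ → ℝ) (a k l : ℕ) : win g a (k + l) = win g a k * win g (a + k) l := by
  induction l with
  | zero => simp [win]
  | succ l ih => rw [← add_assoc, win, ih, win, Matrix.mul_assoc, add_assoc]

theorem win_shift {g : ℕ → ℝ} {n : ℕ} (hg : ∀ i, g (i + n) = g i) (a l : ℕ) :
    win g (a + n) l = win g a l := by
  induction l with
  | zero => rfl
  | succ l ih => rw [win, win, ih, show a + n + l = a + l + n by ring, hg]

theorem win_rot {g : ℕ → ℝ} {n : ℕ} (hg : ∀ i, g (i + n) = g i) (a : ℕ) :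
    (win g a n).trace = (win g 0 n).trace := by
  induction a with
  | zero => rfl
  | succ a ih =>
    rw [← ih]
    cases n with
    | zero => rfl
    | succ n =>
      have h1 : win g a (n + 1) = win g a 1 * win g (a + 1) n := by rw [add_comm n, win_add]
      have h2 : win g (a + 1) (n + 1) = win g (a + 1) n * win g (a + 1 + n) 1 := win_add _ _ _ _
      rw [h1, h2, show a + 1 + n = a + (n + 1) by ring, win_shift hg, Matrix.trace_mul_comm]

/-- The quadratic statistic of the window of `2 k` gaps starting at `a`: the sum of `g (a + 2 i) *
g (a + 2 j + 1)` over `i ≤ j < k`. -/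
noncomputable def PS (g : ℕ → ℝ) (a k : ℕ) : ℝ :=
  ∑ j ∈ Finset.range k, g (a + 2 * j + 1) * ∑ i ∈ Finset.range (j + 1), g (a + 2 * i)

theorem win_even (g : ℕ → ℝ) (a k : ℕ) :
    (win g a (2 * k) 0 0).coeff 0 = 1 ∧ (win g a (2 * k) 0 0).coeff 1 = 0 ∧
    (win g a (2 * k) 0 1).coeff 0 = 0 ∧
    (win g a (2 * k) 0 1).coeff 1 = ∑ i ∈ Finset.range k, g (a + 2 * i) ∧
    (win g a (2 * k) 0 0).coeff 2 = PS g a k := by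
  induction k with
  | zero => simp [win, PS, coeff_one]
  | succ k ih =>
    obtain ⟨h1, h2, h3, h4, h5⟩ := ih
    have e0 : win g a (2 * (k + 1)) 0 0 = win g a (2 * k) 0 0 +
        C (g (a + 2 * k) * g (a + 2 * k + 1)) * (win g a (2 * k) 0 0 * X ^ 2) +
        C (g (a + 2 * k + 1)) * (win g a (2 * k) 0 1 * X) := by
      rw [show 2 * (k + 1) = 2 * k + 1 + 1 by ring, win, win]
      simp [Cm, Matrix.mul_apply, Fin.sum_univ_two, add_assoc]
      ring
    have e1 : win g a (2 * (k + 1)) 0 1 =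
        C (g (a + 2 * k)) * (win g a (2 * k) 0 0 * X) + win g a (2 * k) 0 1 := by
      rw [show 2 * (k + 1) = 2 * k + 1 + 1 by ring, win, win]
      simp [Cm, Matrix.mul_apply, Fin.sum_univ_two]
      ring
    rw [e0, e1]
    simp only [coeff_add, coeff_C_mul, coeff_mul_X_pow', coeff_mul_X, coeff_mul_X_zero, h1, h2, h3, h4, h5, PS,
      Finset.sum_range_succ]
    norm_num
    refine ⟨by ring, by ring⟩

/-- Entrywise derivative. -/
noncomputable def dm (A : Mat) : Mat := A.map derivative
theorem dm_mul (A B : Mat) : dm (A * B) = dm A * B + A * dm B := by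
  ext i j : 1
  simp only [dm, Matrix.mul_apply, Matrix.map_apply, Matrix.add_apply, Fin.sum_univ_two,
    derivative_add, derivative_mul]
  ring

/-- The matrix unit `E₁₁`. -/
noncomputable def E11 : Mat := !![1, 0; 0, 0]

theorem dm_win (g : ℕ → ℝ) (a k : ℕ) : dm (win g a k) =
    ∑ i ∈ Finset.range k, C (g (a + i)) • (win g a i * E11 * win g (a + i + 1) (k - 1 - i)) := by
  induction k with
  | zero => ext i j : 1; fin_cases i <;> fin_cases j <;> simp [dm, win]
  | succ k ih =>
    have hC : dm (Cm (g (a + k))) = C (g (a + k)) • E11 := by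
      ext i j : 1; fin_cases i <;> fin_cases j <;> simp [dm, Cm, E11]
    rw [win, dm_mul, ih, hC, Finset.sum_range_succ, Finset.sum_mul]
    congr 1
    · refine Finset.sum_congr rfl fun i hi => ?_
      have hi := Finset.mem_range.1 hi
      rw [show k + 1 - 1 - i = k - 1 - i + 1 by omega, win,
        show a + i + 1 + (k - 1 - i) = a + k by omega, Matrix.smul_mul]
      simp only [Matrix.mul_assoc]
    · simp [win]

theorem trace_E11_mul (A : Mat) : (E11 * A).trace = A 0 0 := by
  rw [Matrix.trace, Fin.sum_univ_two, Matrix.diag, Matrix.diag, Matrix.mul_apply, Matrix.mul_apply]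
  simp [E11, Fin.sum_univ_two]

/-- Differentiating the cyclic continuant in each gap: three times `F₃` is the sum over `v` of `g
v` times the statistic of the complementary window. -/
theorem euler {g : ℕ → ℝ} {m : ℕ} (hg : ∀ i, g (i + (2 * m + 1)) = g i) :
    3 * (win g 0 (2 * m + 1)).trace.coeff 3 =
      ∑ v ∈ Finset.range (2 * m + 1), g v * PS g (v + 1) m := by
  have h0 : derivative (win g 0 (2 * m + 1)).trace = (dm (win g 0 (2 * m + 1))).trace := by
    simp [Matrix.trace, dm]
  have h1 := congrArg (fun p : ℝ[X] => p.coeff 2) h0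
  simp only [coeff_derivative] at h1
  rw [dm_win, Matrix.trace_sum, finsetSum_coeff] at h1
  have h2 : ∀ v ∈ Finset.range (2 * m + 1),
      (C (g (0 + v)) • (win g 0 v * E11 * win g (0 + v + 1) (2 * m + 1 - 1 - v))).trace.coeff 2
      = g v * PS g (v + 1) m := by
    intro v hv
    have hv := Finset.mem_range.1 hv
    rw [Matrix.trace_smul, smul_eq_mul, coeff_C_mul, Matrix.mul_assoc, Matrix.trace_mul_comm,
      Matrix.mul_assoc, ← win_shift hg 0]
    have : 0 + (2 * m + 1) = 0 + v + 1 + (2 * m + 1 - 1 - v) := by omega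
    rw [this, ← win_add, show 2 * m + 1 - 1 - v + v = 2 * m by omega, ← (win_even g (v + 1) m).2.2.2.2]
    rw [trace_E11_mul, zero_add]
  rw [Finset.sum_congr rfl h2] at h1
  rw [← h1]; push_cast; ring

theorem sum_shift {φ : ℕ → ℝ} {n : ℕ} (h : ∀ i, φ (i + n) = φ i) (a : ℕ) :
    ∑ v ∈ Finset.range n, φ (a + v) = ∑ v ∈ Finset.range n, φ v := by
  induction a with
  | zero => simp
  | succ a ih =>
    rw [← ih]
    have h1 := Finset.sum_range_succ (fun v => φ (a + v)) n
    have h2 := Finset.sum_range_succ' (fun v => φ (a + v)) n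
    rw [h a] at h1
    rw [add_zero] at h2
    have h3 : ∑ v ∈ Finset.range n, φ (a + (v + 1)) = ∑ v ∈ Finset.range n, φ (a + 1 + v) :=
      Finset.sum_congr rfl fun v _ => by rw [show a + (v + 1) = a + 1 + v by ring]
    linarith

/-- A long window is covered by its two subwindows shorter by two gaps, up to the outermost pair. -/
theorem PS_split {g : ℕ → ℝ} (h0 : ∀ i, 0 ≤ g i) (a k : ℕ) :
    PS g a (k + 2) ≤ PS g a (k + 1) + PS g (a + 2) (k + 1) + g a * g (a + 2 * k + 3) := by
  have hpos : 0 ≤ PS g (a + 2) k :=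
    Finset.sum_nonneg fun j _ => mul_nonneg (h0 _) (Finset.sum_nonneg fun i _ => h0 _)
  have e1 : PS g a (k + 2) = PS g a (k + 1) + g (a + 2 * (k + 1) + 1) *
      ∑ i ∈ Finset.range (k + 1 + 1), g (a + 2 * i) := by
    rw [PS, Finset.sum_range_succ, ← PS]
  have e2 : PS g (a + 2) (k + 1) = PS g (a + 2) k + g (a + 2 + 2 * k + 1) *
      ∑ i ∈ Finset.range (k + 1), g (a + 2 + 2 * i) := by
    rw [PS, Finset.sum_range_succ, ← PS]
  rw [e1, e2, Finset.sum_range_succ']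
  have h3 : ∀ i, a + 2 * (i + 1) = a + 2 + 2 * i := fun i => by ring
  simp only [h3]
  rw [show a + 2 + 2 * k + 1 = a + 2 * k + 3 by ring]
  simp only [mul_zero, add_zero]
  linarith

theorem PS_ge {g : ℕ → ℝ} (h0 : ∀ i, 0 ≤ g i) (a k : ℕ) :
    g a * g (a + 1) + g (a + 2) * g (a + 3) ≤ PS g a (k + 2) := by
  have h : PS g a 2 ≤ PS g a (k + 2) := by
    apply Finset.sum_le_sum_of_subset_of_nonneg
    · intro i; simp; omega
    · intro j _ _; exact mul_nonneg (h0 _) (Finset.sum_nonneg fun i _ => h0 _)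
  have : PS g a 2 = g (a + 1) * g a + g (a + 3) * (g a + g (a + 2)) := by
    simp [PS, Finset.sum_range_succ]
  nlinarith [mul_nonneg (h0 (a + 3)) (h0 a)]

/-- If every window of `2 k + 4` among at least seven gaps is light, the cubic coefficient alone
is at most `S ^ 3 / 27`. -/
theorem light_big {g : ℕ → ℝ} {k : ℕ} (hg : ∀ i, g (i + (2 * k + 7)) = g i) (h0 : ∀ i, 0 ≤ g i)
    (hB : ∀ v, 24 * PS g v (k + 2) ≤ (∑ i ∈ Finset.range (2 * k + 7), g i) ^ 2) :
    (win g 0 (2 * k + 7)).trace.coeff 3 ≤ (∑ i ∈ Finset.range (2 * k + 7), g i) ^ 3 / 27 := by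
  have hE := @euler g (k + 3) (by intro i; exact hg i)
  rw [show 2 * (k + 3) + 1 = 2 * k + 7 by ring] at hE
  set n := 2 * k + 7 with hn
  set S := ∑ i ∈ Finset.range n, g i with hS
  have hS0 : 0 ≤ S := Finset.sum_nonneg fun i _ => h0 i
  have hw : ∀ c : ℕ, ∑ v ∈ Finset.range n, g (c + v) * (S ^ 2 / 24) = S ^ 3 / 24 := by
    intro c
    rw [← Finset.sum_mul, sum_shift hg]; ring
  set q := ∑ v ∈ Finset.range n, g v * g (v + 1) * g (v + 2) with hq
  have hqs : ∀ c : ℕ, ∑ v ∈ Finset.range n, g (c + v) * g (c + v + 1) * g (c + v + 2) = q := by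
    intro c
    apply sum_shift (φ := fun v => g v * g (v + 1) * g (v + 2))
    intro i
    simp only [show i + n + 1 = i + 1 + n by ring, show i + n + 2 = i + 2 + n by ring, hg]
  -- the three-consecutive-gap sum is at most `S³/48`
  have hq48 : q ≤ S ^ 3 / 48 := by
    have a1 : ∑ v ∈ Finset.range n, g (2 + v) * (g v * g (v + 1) + g (v + 2) * g (v + 3)) ≤ S ^ 3 / 24 := by
      rw [← hw 2]
      exact Finset.sum_le_sum fun v _ => mul_le_mul_of_nonneg_left
        (by linarith [PS_ge h0 v k, hB v]) (h0 _)
    have a2 : ∑ v ∈ Finset.range n, g (1 + v) * (g v * g (v + 1) + g (v + 2) * g (v + 3)) ≤ S ^ 3 / 24 := by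
      rw [← hw 1]
      exact Finset.sum_le_sum fun v _ => mul_le_mul_of_nonneg_left
        (by linarith [PS_ge h0 v k, hB v]) (h0 _)
    have sA : ∀ c, ∑ v ∈ Finset.range n, g (c + v) ^ 2 * g (c + v + 1) =
        ∑ v ∈ Finset.range n, g v ^ 2 * g (v + 1) := by
      intro c
      apply sum_shift (φ := fun v => g v ^ 2 * g (v + 1))
      intro i
      simp only [show i + n + 1 = i + 1 + n by ring, hg]
    have sB : ∑ v ∈ Finset.range n, g (1 + v) * g (1 + v + 1) ^ 2 =
        ∑ v ∈ Finset.range n, g v * g (v + 1) ^ 2 := by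
      apply sum_shift (φ := fun v => g v * g (v + 1) ^ 2)
      intro i
      simp only [show i + n + 1 = i + 1 + n by ring, hg]
    have a1' : ∑ v ∈ Finset.range n, g (2 + v) * (g v * g (v + 1) + g (v + 2) * g (v + 3)) =
        q + ∑ v ∈ Finset.range n, g v ^ 2 * g (v + 1) := by
      rw [← sA 2, hq, ← Finset.sum_add_distrib]
      refine Finset.sum_congr rfl fun v _ => ?_
      rw [show 2 + v = v + 2 by ring, show v + 2 + 1 = v + 3 by ring]; ring
    have a2' : ∑ v ∈ Finset.range n, g (1 + v) * (g v * g (v + 1) + g (v + 2) * g (v + 3)) =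
        ∑ v ∈ Finset.range n, g v * g (v + 1) ^ 2 + q := by
      rw [← hqs 1, ← Finset.sum_add_distrib]
      refine Finset.sum_congr rfl fun v _ => ?_
      rw [show 1 + v = v + 1 by ring, show v + 1 + 1 = v + 2 by ring,
        show v + 1 + 2 = v + 3 by ring]; ring
    have a3 : 2 * q ≤ ∑ v ∈ Finset.range n, g v ^ 2 * g (v + 1)
        + ∑ v ∈ Finset.range n, g v * g (v + 1) ^ 2 := by
      rw [← sB, hq, ← Finset.sum_add_distrib, Finset.mul_sum]
      refine Finset.sum_le_sum fun v _ => ?_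
      rw [show 1 + v = v + 1 by ring, show v + 1 + 1 = v + 2 by ring]
      nlinarith [mul_nonneg (h0 (v + 1)) (sq_nonneg (g v - g (v + 2)))]
    linarith
  have hsum : ∑ v ∈ Finset.range n, g v * PS g (v + 1) (k + 3) ≤
      S ^ 3 / 24 + S ^ 3 / 24 + q := by
    rw [← hqs (2 * k + 6), ← hw 0, ← Finset.sum_add_distrib, ← Finset.sum_add_distrib]
    refine Finset.sum_le_sum fun v _ => ?_
    have h1 := PS_split h0 (v + 1) (k + 1)
    have h2 := hB (v + 1)
    have h3 := hB (v + 1 + 2)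
    have e1 : g (2 * k + 6 + v + 1) = g v := by rw [← hg v]; congr 1; omega
    have e2 : g (2 * k + 6 + v + 2) = g (v + 1) := by rw [← hg (v + 1)]; congr 1; omega
    have e3 : g (v + 1 + 2 * (k + 1) + 3) = g (2 * k + 6 + v) := by congr 1; ring
    rw [e1, e2, zero_add]
    rw [e3] at h1
    have := mul_le_mul_of_nonneg_left (h1.trans (add_le_add_left (add_le_add
      (show PS g (v + 1) (k + 2) ≤ S ^ 2 / 24 by linarith)
      (show PS g (v + 1 + 2) (k + 2) ≤ S ^ 2 / 24 by linarith)) _)) (h0 v)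
    linarith
  have : 0 ≤ S ^ 3 := by positivity
  linarith

/-! ### The sharp gap inequality -/

/-- The functional to be bounded: `S² F₃ - 24 F₅` for a cyclic list of gaps. -/
noncomputable def fB (h : List ℝ) : ℝ :=
  h.sum ^ 2 * (trC h).coeff 3 - 24 * (trC h).coeff 5

theorem Cm_merge (a b : ℝ) : Cm a * (Cm 0 * Cm b) = Cm (a + b) := by
  ext i j : 1
  fin_cases i <;> fin_cases j <;> simp [Cm, Matrix.mul_apply, Fin.sum_univ_two, add_mul, add_comm]

/-- As a function of two gaps `x`, `z` on either side of `b` with `x + z` fixed, the cyclic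
continuant is its linear interpolation plus a term `x b z X ^ 3` times the remaining window. -/
theorem trC_exchange (x z b : ℝ) (L : List ℝ) :
    C (x + z) * trC (x :: b :: z :: L) - C x * trC ((x + z) :: b :: 0 :: L)
      - C z * trC (0 :: b :: (x + z) :: L) =
    C ((x + z) * x * b * z) * (((L.map Cm).prod 0 0) * X ^ 3) := by
  simp only [trC, List.map_cons, List.prod_cons]
  generalize (L.map Cm).prod = R
  simp [Cm, Matrix.trace, Matrix.vecMul, dotProduct, Fin.sum_univ_two]
  ring

theorem trC_merge_right (s b l : ℝ) (L : List ℝ) :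
    trC (s :: b :: 0 :: l :: L) = trC (s :: (b + l) :: L) := by
  simp only [trC, List.map_cons, List.prod_cons]
  rw [← Cm_merge b l]; simp only [Matrix.mul_assoc]

theorem trC_merge_left (s b l : ℝ) (L : List ℝ) :
    trC (0 :: b :: s :: (L ++ [l])) = trC ((l + b) :: s :: L) := by
  simp only [trC, List.map_cons, List.prod_cons, List.map_append, List.prod_append, List.map_nil,
    List.prod_nil, mul_one]
  rw [← Cm_merge l b]
  simp only [← Matrix.mul_assoc]
  rw [Matrix.trace_mul_comm]
  simp only [Matrix.mul_assoc]

/-- Call a window heavy when 24 times its quadratic statistic is at least `S ^ 2`.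
A heavy window lets one of the two gaps flanking a third be emptied without decreasing `fB`,
which reduces the number of gaps by two. -/
theorem fB_reduce {k : ℕ} (ih : ∀ h : List ℝ, h.length = 2 * k + 3 → (∀ a ∈ h, 0 ≤ a) →
      fB h ≤ h.sum ^ 5 / 27) (x b z : ℝ) (L : List ℝ) (hL : L.length = 2 * k + 2)
    (h0 : ∀ a ∈ x :: b :: z :: L, 0 ≤ a) (hR : ((L.map Cm).prod 0 0).coeff 0 = 1)
    (hW : (x :: b :: z :: L).sum ^ 2 ≤ 24 * ((L.map Cm).prod 0 0).coeff 2) :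
    fB (x :: b :: z :: L) ≤ (x :: b :: z :: L).sum ^ 5 / 27 := by
  have hx : 0 ≤ x := h0 _ (by simp)
  have hb : 0 ≤ b := h0 _ (by simp)
  have hz : 0 ≤ z := h0 _ (by simp)
  have hLp : ∀ a ∈ L, 0 ≤ a := fun a ha => h0 a (by simp [ha])
  have r1 : ∀ s, 0 ≤ s → fB (s :: b :: 0 :: L) ≤ (s :: b :: 0 :: L).sum ^ 5 / 27 := by
    intro s hs
    obtain ⟨l, L', rfl⟩ : ∃ l L', L = l :: L' := by
      cases L with
      | nil => simp at hL
      | cons l L' => exact ⟨l, L', rfl⟩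
    have h1 := ih (s :: (b + l) :: L') (by simp at hL ⊢; omega) (by
      intro a ha
      simp only [List.mem_cons] at ha
      rcases ha with rfl | rfl | ha
      · exact hs
      · exact add_nonneg hb (hLp _ (by simp))
      · exact hLp _ (by simp [ha]))
    have e : (s :: (b + l) :: L').sum = (s :: b :: 0 :: l :: L').sum := by simp; ring
    rw [fB, e] at h1
    rw [fB, trC_merge_right]; exact h1
  have r2 : ∀ s, 0 ≤ s → fB (0 :: b :: s :: L) ≤ (0 :: b :: s :: L).sum ^ 5 / 27 := by
    intro s hs
    obtain ⟨L', l, rfl⟩ : ∃ L' l, L = L' ++ [l] := by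
      have hne : L ≠ [] := by rintro rfl; simp at hL
      exact ⟨_, _, (List.dropLast_append_getLast hne).symm⟩
    have h1 := ih ((l + b) :: s :: L') (by simp at hL ⊢; omega) (by
      intro a ha
      simp only [List.mem_cons] at ha
      rcases ha with rfl | rfl | ha
      · exact add_nonneg (hLp _ (by simp)) hb
      · exact hs
      · exact hLp _ (by simp [ha]))
    have e : ((l + b) :: s :: L').sum = (0 :: b :: s :: (L' ++ [l])).sum := by simp; ring
    rw [fB, e] at h1
    rw [fB, trC_merge_left]; exact h1
  rcases eq_or_lt_of_le (add_nonneg hx hz) with hs | hs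
  · have : x = 0 := by linarith
    subst this
    exact r2 z hz
  · have q1 := r1 (x + z) hs.le
    have q2 := r2 (x + z) hs.le
    have ex := trC_exchange x z b L
    have c3 := congrArg (fun p : ℝ[X] => p.coeff 3) ex
    have c5 := congrArg (fun p : ℝ[X] => p.coeff 5) ex
    simp only [coeff_sub, coeff_C_mul, coeff_mul_X_pow'] at c3 c5
    norm_num at c3 c5
    rw [hR] at c3
    have e1 : ((x + z) :: b :: 0 :: L).sum = (x :: b :: z :: L).sum := by simp; ring
    have e2 : (0 :: b :: (x + z) :: L).sum = (x :: b :: z :: L).sum := by simp; ring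
    rw [fB, e1] at q1
    rw [fB, e2] at q2
    rw [fB]
    set S := (x :: b :: z :: L).sum
    have hpos : 0 ≤ (x + z) * x * b * z := by positivity
    have k1 := mul_le_mul_of_nonneg_left q1 hx
    have k2 := mul_le_mul_of_nonneg_left q2 hz
    have k3 := mul_nonneg hpos (sub_nonneg.2 hW)
    refine le_of_mul_le_mul_left ?_ hs
    have k4 : (x + z) * (S ^ 2 * (trC (x :: b :: z :: L)).coeff 3 - 24 * (trC (x :: b :: z :: L)).coeff 5)
      = x * (S ^ 2 * (trC ((x + z) :: b :: 0 :: L)).coeff 3 - 24 * (trC ((x + z) :: b :: 0 :: L)).coeff 5)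
      + z * (S ^ 2 * (trC (0 :: b :: (x + z) :: L)).coeff 3 - 24 * (trC (0 :: b :: (x + z) :: L)).coeff 5)
      - (x + z) * x * b * z * (24 * ((L.map Cm).prod 0 0).coeff 2 - S ^ 2) := by
      linear_combination S ^ 2 * c3 - 24 * c5
    rw [k4]
    linarith

theorem trC_three (a b c : ℝ) : (trC [a, b, c]).coeff 3 = a * b * c ∧
    (trC [a, b, c]).coeff 5 = 0 := by
  have : trC [a, b, c] = C (a * b * c) * X ^ 3 + C (a + b + c) * X := by
    simp [trC, Cm, Matrix.trace, Fin.sum_univ_two, Matrix.mul_apply]; ring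
  rw [this]
  simp only [coeff_add, coeff_C_mul, coeff_X_pow, coeff_X]
  norm_num

theorem trC_five (a b c d e : ℝ) :
    (trC [a, b, c, d, e]).coeff 3 = a*b*c + b*c*d + c*d*e + d*e*a + e*a*b ∧
    (trC [a, b, c, d, e]).coeff 5 = a*b*c*d*e := by
  have : trC [a, b, c, d, e] = C (a * b * c * d * e) * X ^ 5 +
      C (a*b*c + b*c*d + c*d*e + d*e*a + e*a*b) * X ^ 3 + C (a + b + c + d + e) * X := by
    simp [trC, Cm, Matrix.trace, Fin.sum_univ_two, Matrix.mul_apply]; ring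
  rw [this]
  simp only [coeff_add, coeff_C_mul, coeff_X_pow, coeff_X]
  norm_num

theorem amgm3 {a b c : ℝ} (ha : 0 ≤ a) (hb : 0 ≤ b) (hc : 0 ≤ c) :
    27 * (a * b * c) ≤ (a + b + c) ^ 3 := by
  nlinarith [mul_nonneg ha (sq_nonneg (b - c)), mul_nonneg hb (sq_nonneg (a - c)),
    mul_nonneg hc (sq_nonneg (a - b)), mul_nonneg (add_nonneg (add_nonneg ha hb) hc)
      (add_nonneg (add_nonneg (sq_nonneg (a - b)) (sq_nonneg (b - c))) (sq_nonneg (a - c)))]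

/-- Five gaps with all windows light. -/
theorem light_five {a b c d e S : ℝ} (ha : 0 ≤ a) (hb : 0 ≤ b) (hc : 0 ≤ c) (hd : 0 ≤ d)
    (he : 0 ≤ e) (hS : S = a + b + c + d + e)
    (h1 : 24 * (a * b) ≤ S ^ 2) (h2 : 24 * (b * c) ≤ S ^ 2) (h3 : 24 * (c * d) ≤ S ^ 2)
    (h4 : 24 * (d * e) ≤ S ^ 2) (h5 : 24 * (e * a) ≤ S ^ 2) :
    S ^ 2 * (a*b*c + b*c*d + c*d*e + d*e*a + e*a*b) - 24 * (a*b*c*d*e) ≤ S ^ 5 / 27 := by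
  have hS0 : 0 ≤ S := by rw [hS]; positivity
  have key : ∀ w p p' : ℝ, 0 ≤ w → 24 * p ≤ S ^ 2 → 24 * p' ≤ S ^ 2 →
      w * (S ^ 2 * (p + p') / 2 - 24 / 5 * (p * p')) ≤ w * (S ^ 4 / 30) := by
    intro w p p' hw hp hp'
    refine mul_le_mul_of_nonneg_left ?_ hw
    nlinarith [mul_nonneg (sub_nonneg.2 hp) (sub_nonneg.2 hp'),
      mul_nonneg (sq_nonneg S) (sub_nonneg.2 hp), mul_nonneg (sq_nonneg S) (sub_nonneg.2 hp')]
  have k1 := key a _ _ ha h2 h4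
  have k2 := key b _ _ hb h3 h5
  have k3 := key c _ _ hc h4 h1
  have k4 := key d _ _ hd h5 h2
  have k5 := key e _ _ he h1 h3
  have k6 : a * (S ^ 4 / 30) + b * (S ^ 4 / 30) + c * (S ^ 4 / 30) + d * (S ^ 4 / 30)
      + e * (S ^ 4 / 30) = S ^ 5 / 30 := by
    rw [show S ^ 5 = S ^ 4 * S by ring]; nth_rw 7 [hS]; ring
  have : 0 ≤ S ^ 5 := by positivity
  nlinarith

theorem NN_trC {h : List ℝ} (h0 : ∀ a ∈ h, 0 ≤ a) : NN (trC h) := by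
  have : MN (h.map Cm).prod := by
    induction h with
    | nil => simpa using MN.one
    | cons a h ih =>
      rw [List.map_cons, List.prod_cons]
      refine MN.mul (MN.of ((NN.C (h0 a (by simp))).mul NN.X) NN.one NN.one NN.zero) (ih ?_)
      intro b hb; exact h0 b (by simp [hb])
  exact this.trace

theorem PS_shift {g : ℕ → ℝ} {n : ℕ} (hg : ∀ i, g (i + n) = g i) (a k : ℕ) :
    PS g (a + n) k = PS g a k := by
  unfold PS
  refine Finset.sum_congr rfl fun j _ => ?_
  rw [show a + n + 2 * j + 1 = a + 2 * j + 1 + n by ring, hg]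
  congr 1
  refine Finset.sum_congr rfl fun i _ => ?_
  rw [show a + n + 2 * i = a + 2 * i + n by ring, hg]

/-- The bound `S² F₃ - 24 F₅ ≤ S⁵ / 27` for an odd number of nonnegative gaps. -/
theorem fB_le (m : ℕ) : ∀ h : List ℝ, h.length = 2 * m + 1 → (∀ a ∈ h, 0 ≤ a) →
    fB h ≤ h.sum ^ 5 / 27 := by
  induction m with
  | zero =>
    intro h hl h0
    obtain ⟨a, rfl⟩ := List.length_eq_one_iff.1 hl
    have : 0 ≤ a := h0 a (by simp)
    have : 0 ≤ a ^ 5 / 27 := by positivity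
    simpa [fB, trC, Cm, Matrix.trace, Fin.sum_univ_two, coeff_X] using this
  | succ m ih =>
    intro h hl h0
    rcases Nat.eq_zero_or_pos m with rfl | hm
    · obtain ⟨a, b, c, rfl⟩ := List.length_eq_three.1 hl
      have := amgm3 (h0 a (by simp)) (h0 b (by simp)) (h0 c (by simp))
      rw [fB, (trC_three a b c).1, (trC_three a b c).2]
      simp only [List.sum_cons, List.sum_nil, add_zero]
      nlinarith [mul_le_mul_of_nonneg_left this (sq_nonneg (a + b + c))]
    obtain ⟨k, rfl⟩ : ∃ k, m = k + 1 := ⟨m - 1, by omega⟩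
    have hl : h.length = 2 * k + 5 := by omega
    set n := 2 * k + 5 with hn
    set g : ℕ → ℝ := fun i => h.getD (i % n) 0 with hgdef
    have hg : ∀ i, g (i + n) = g i := fun i => by simp [hgdef]
    have hg0 : ∀ i, 0 ≤ g i := by
      intro i
      have : i % n < h.length := by rw [hl]; exact Nat.mod_lt _ (by omega)
      simp only [hgdef, List.getD_eq_getElem _ _ this]
      exact h0 _ (List.getElem_mem _)
    have hh : h = (List.range n).map g := by
      apply List.ext_getElem
      · simp [hl]
      · intro i h1 h2
        rw [hl] at h1
        simp [hgdef, Nat.mod_eq_of_lt h1]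
        rw [List.getElem?_eq_getElem]; rfl
    have htr : trC h = (win g 0 n).trace := by
      rw [trC, ← win_list, hh, List.map_map]; simp [Function.comp_def]
    have hsum : h.sum = ∑ i ∈ Finset.range n, g i := by
      rw [hh]; rfl
    have hrot : ∀ a, fB h = fB ((List.range n).map fun i => g (a + i)) ∧
        ((List.range n).map fun i => g (a + i)).sum = h.sum := by
      intro a
      have e1 : ((List.range n).map fun i => g (a + i)).sum = h.sum := by
        rw [hsum, ← sum_shift hg a]; rfl
      refine ⟨?_, e1⟩
      rw [fB, fB, e1, htr, ← win_rot hg a, trC, ← win_list, List.map_map]; rfl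
    -- windows are taken from index `v + 3` so that the three exchanged gaps start at `v`
    by_cases hheavy : ∃ v, h.sum ^ 2 ≤ 24 * PS g (v + 3) (k + 1)
    · obtain ⟨v, hv⟩ := hheavy
      obtain ⟨e1, e2⟩ := hrot v
      have e3 : ((List.range n).map fun i => g (v + i)) = g v :: g (v + 1) :: g (v + 2) ::
          ((List.range (2 * (k + 1))).map fun i => g (v + 3 + i)) := by
        rw [show n = 2 * (k + 1) + 1 + 1 + 1 by omega]
        simp only [List.range_succ_eq_map, List.map_cons, List.map_map, add_zero]
        simp only [Function.comp_def, Nat.succ_eq_add_one, ← add_assoc, zero_add]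
        congr 3
        refine List.map_congr_left fun i _ => ?_
        congr 1; ring
      have e4 : (((List.range (2 * (k + 1))).map fun i => g (v + 3 + i)).map Cm).prod =
          win g (v + 3) (2 * (k + 1)) := by
        rw [← win_list, List.map_map]; rfl
      have h2 := win_even g (v + 3) (k + 1)
      rw [← e2, e1, e3]
      apply fB_reduce (k := k) ih
      · simp; ring
      · rw [← e3]
        intro a ha
        obtain ⟨i, -, rfl⟩ := List.mem_map.1 ha
        exact hg0 _
      · rw [e4]; exact h2.1
      · rw [e4, h2.2.2.2.2, ← e3, e2]; exact hv
    · push Not at hheavy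
      have hB : ∀ v, 24 * PS g v (k + 1) ≤ h.sum ^ 2 := by
        intro v
        have := hheavy (v + n - 3)
        rw [show v + n - 3 + 3 = v + n by omega, PS_shift hg] at this
        exact this.le
      rcases Nat.eq_zero_or_pos k with rfl | hk
      · have hex : h = [g 0, g 1, g 2, g 3, g 4] := by
          rw [hh]; rfl
        have hp : ∀ v, PS g v 1 = g v * g (v + 1) := by intro v; simp [PS, mul_comm]
        simp only [zero_add, hp] at hB
        have g5 : g 5 = g 0 := hg 0
        have b0 := hB 0
        have b1 := hB 1
        have b2 := hB 2
        have b3 := hB 3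
        have b4 := hB 4
        norm_num at b0 b1 b2 b3 b4
        rw [g5] at b4
        have hsm : h.sum = g 0 + g 1 + g 2 + g 3 + g 4 := by
          rw [hsum]; simp [Finset.sum_range_succ, hn]
        have := light_five (hg0 0) (hg0 1) (hg0 2) (hg0 3) (hg0 4) hsm b0 b1 b2 b3 b4
        have t := trC_five (g 0) (g 1) (g 2) (g 3) (g 4)
        rw [← hex] at t
        rw [fB, t.1, t.2]
        exact this
      · obtain ⟨j, rfl⟩ : ∃ j, k = j + 1 := ⟨k - 1, by omega⟩
        have hn' : n = 2 * j + 7 := by omega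
        have hL := light_big (g := g) (k := j) (by rw [← hn']; exact hg) hg0
          (by rw [← hn', ← hsum]; exact hB)
        rw [← hn', ← htr, ← hsum] at hL
        have h5 := NN_trC h0 5
        rw [fB]
        nlinarith [mul_le_mul_of_nonneg_left hL (sq_nonneg h.sum)]

/-! ### From spin lists to gap lists; one and three tokens -/

/-- Each spin contributes one gap variable equal to `1` at its own parity and a zero gap at the
other; a final zero gap realises the antiperiodic boundary condition. -/
noncomputable def gaps (L : List Bool) : List ℝ :=
  (L.flatMap fun s => [if s then 1 else 0, if s then 0 else 1]) ++ [0]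

theorem PP_eq_trC (L : List Bool) : PP L = trC (gaps L) := by
  have h : PM L = ((L.flatMap fun s => [if s then (1 : ℝ) else 0, if s then 0 else 1]).map Cm).prod := by
    induction L with
    | nil => simp [PM]
    | cons s L ih =>
      rw [List.flatMap_cons, List.map_append, List.prod_append, ← ih, PM, List.map_cons,
        List.prod_cons, ← PM]
      congr 1
      cases s <;> ext i j : 1 <;> fin_cases i <;> fin_cases j <;>
        simp [U, Cm]
  rw [PP, h, trC, gaps, List.map_append, List.prod_append]
  congr 2
  ext i j : 1
  fin_cases i <;> fin_cases j <;> simp [flipM, Cm]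

theorem PP_bound (L : List Bool) :
    (L.length : ℝ) ^ 2 * (PP L).coeff 3 - 24 * (PP L).coeff 5 ≤ (L.length : ℝ) ^ 5 / 27 := by
  have hlen : (gaps L).length = 2 * L.length + 1 := by
    induction L with
    | nil => simp [gaps]
    | cons s L ih => simp [gaps] at ih ⊢; omega
  have hsum : (gaps L).sum = L.length := by
    induction L with
    | nil => simp [gaps]
    | cons s L ih =>
      have := ih (by simp [gaps]; ring)
      cases s <;> simp [gaps] at this ⊢ <;> rw [this] <;> ring
  have h0 : ∀ a ∈ gaps L, 0 ≤ a := by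
    intro a ha
    simp only [gaps, List.mem_append, List.mem_flatMap, List.mem_cons, List.not_mem_nil, or_false] at ha
    rcases ha with ⟨s, -, rfl | rfl⟩ | rfl
    · split_ifs <;> norm_num
    · split_ifs <;> norm_num
    · exact le_rfl
  have := fB_le L.length (gaps L) hlen h0
  rwa [fB, hsum, ← PP_eq_trC] at this

theorem U_add (s : Bool) (a b : ℝ[X]) : U s a * U s b = U s (a + b) := by
  cases s <;> ext i j : 1 <;> fin_cases i <;> fin_cases j <;> simp [U, add_comm]

theorem PM_append (L L' : List Bool) : PM (L ++ L') = PM L * PM L' := by simp [PM]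

theorem U_zero (s : Bool) : U s 0 = 1 := by
  cases s <;> ext i j : 1 <;> fin_cases i <;> fin_cases j <;> simp [U]

theorem PM_replicate (k : ℕ) (s : Bool) : PM (List.replicate k s) = U s (C (k : ℝ) * X) := by
  induction k with
  | zero => simp [PM, U_zero]
  | succ k ih =>
    rw [List.replicate_succ, PM, List.map_cons, List.prod_cons, ← PM, ih, U_add]
    congr 1
    push_cast
    rw [C_add, C_1]; ring

/-- Three tokens with gaps `a`, `b`, `c + p`: the cubic coefficient is the product of the gaps. -/
theorem PP_three (p a b c : ℕ) : (PP (List.replicate p false ++ List.replicate a true ++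
    List.replicate b false ++ List.replicate c true)).coeff 3 = a * b * (c + p : ℝ) := by
  rw [PP, PM_append, PM_append, PM_append]
  simp only [PM_replicate]
  have : (U false (C (p : ℝ) * X) * U true (C (a : ℝ) * X) * U false (C (b : ℝ) * X) *
      U true (C (c : ℝ) * X) * flipM).trace =
      C (a * b * (c + p) : ℝ) * X ^ 3 + C (a + b + (c + p) : ℝ) * X := by
    simp [U, flipM, Matrix.trace, Fin.sum_univ_two]; ring
  rw [this]
  simp only [coeff_add, coeff_C_mul, coeff_X_pow, coeff_X]
  norm_num

theorem PM_chK_zero (s : Bool) (L : List Bool) (h : chK s L = 0) :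
    PM L = U s (C (L.length : ℝ) * X) := by
  have : L = List.replicate L.length s := by
    induction L generalizing s with
    | nil => rfl
    | cons t L ih =>
      simp only [chK] at h
      have hst : s = t := by by_contra hne; simp [hne] at h
      subst hst
      rw [List.length_cons, List.replicate_succ, ← ih s (by omega)]
  rw [this, PM_replicate, List.length_replicate]

theorem PM_chK_one (s : Bool) (L : List Bool) (h : chK s L = 1) :
    ∃ p q : ℝ, PM L = U s (C p * X) * U (!s) (C q * X) := by
  induction L generalizing s with
  | nil => simp [chK] at h
  | cons t L ih =>
    simp only [chK] at h
    by_cases hst : s = t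
    · subst hst
      obtain ⟨p, q, e⟩ := ih s (by simpa using h)
      refine ⟨1 + p, q, ?_⟩
      rw [PM, List.map_cons, List.prod_cons, ← PM, e, ← Matrix.mul_assoc, U_add]
      congr 2
      rw [C_add, C_1]; ring
    · have ht : t = !s := by cases s <;> cases t <;> simp_all
      rw [if_neg hst] at h
      refine ⟨0, 1 + L.length, ?_⟩
      rw [PM, List.map_cons, List.prod_cons, ← PM, PM_chK_zero t L (by omega), U_add, ← ht]
      simp [U_zero, add_mul]

theorem PP_chK_one (s : Bool) (L : List Bool) (h : chK s L = 1) :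
    (PP L).coeff 3 = 0 ∧ (PP L).coeff 5 = 0 := by
  obtain ⟨p, q, e⟩ := PM_chK_one s L h
  have : PP L = C (p + q) * X := by
    rw [PP, e]
    cases s <;> simp [U, flipM, Matrix.trace, Fin.sum_univ_two] <;> ring
  rw [this]
  simp [coeff_X, ← C_add, -map_add]

theorem NN_PP (L : List Bool) : NN (PP L) := by
  have : MN (PM L) := by
    induction L with
    | nil => simpa [PM] using MN.one
    | cons s L ih =>
      rw [PM, List.map_cons, List.prod_cons, ← PM]
      exact (MN.U s NN.X).mul ih
  exact (this.mul MN.flipM).trace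

theorem chK_odd (s : Bool) (L : List Bool) : Odd (chK s L) ↔ L.getLastD s ≠ s := by
  induction L generalizing s with
  | nil => simp [chK]
  | cons t L ih =>
    rw [chK, List.getLastD_cons]
    have := ih t
    generalize L.getLastD t = e at *
    by_cases hst : s = t
    · subst hst; simpa using this
    · rw [if_neg hst, add_comm, Nat.odd_add_one, this]
      cases s <;> cases t <;> cases e <;> simp_all

/-! ### Spin encoding of configurations -/

/-- The spin preceding `v`, with `s0` standing before the first one. -/
def prv {n : ℕ} (s0 : Bool) (s : Fin n → Bool) (v : Fin n) : Bool :=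
  if h : v.val = 0 then s0 else s ⟨v.val - 1, by omega⟩

theorem prv_zero {n : ℕ} (s0 : Bool) (s : Fin (n + 1) → Bool) : prv s0 s 0 = s0 := by simp [prv]

theorem prv_succ {n : ℕ} (s0 : Bool) (s : Fin (n + 1) → Bool) (i : Fin n) :
    prv s0 s i.succ = prv (s 0) (fun j => s j.succ) i := by
  unfold prv
  by_cases h : i.val = 0
  · have : i.succ.val - 1 = 0 := by simp [h]
    simp [h]
  · have : (⟨i.val, by omega⟩ : Fin (n + 1)) = Fin.succ ⟨i.val - 1, by omega⟩ := by
      ext; simp; omega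
    simp [h, this]

theorem chK_ofFn {n : ℕ} (s0 : Bool) (s : Fin n → Bool) :
    chK s0 (List.ofFn s) = ∑ v, if prv s0 s v = s v then 0 else 1 := by
  induction n generalizing s0 with
  | zero => simp [chK]
  | succ n ih => rw [List.ofFn_succ, chK, ih, Fin.sum_univ_succ]; simp only [prv_zero, prv_succ]

theorem chV_ofFn {n : ℕ} (s0 : Bool) (s : Fin n → Bool) :
    chV s0 (List.ofFn s) = (List.ofFn fun v => 1 + y • (Y (prv s0 s v) + Y (s v))).prod := by
  induction n generalizing s0 with
  | zero => simp [chV]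
  | succ n ih =>
    rw [List.ofFn_succ, chV, ih, List.ofFn_succ, List.prod_cons]; simp only [prv_zero, prv_succ]

/-- Expanding an ordered product of sums over all choices of summands. -/
theorem sum_prod_ofFn {R : Type*} [Ring R] {n : ℕ} (f g : Fin n → R) :
    ∑ c : Fin n → Bool, (List.ofFn fun v => if c v then f v else g v).prod =
      (List.ofFn fun v => f v + g v).prod := by
  induction n with
  | zero => simp
  | succ n ih =>
    rw [List.ofFn_succ, List.prod_cons, ← ih, ← (Fin.consEquiv fun _ => Bool).sum_comp,
      Fintype.sum_prod_type, Fintype.sum_bool]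
    simp only [Fin.consEquiv_apply, List.ofFn_succ, Fin.cons_zero, Fin.cons_succ, List.prod_cons]
    simp [Finset.mul_sum, add_mul, Finset.sum_add_distrib]

theorem prod_ofFn_smul {n : ℕ} (f : Fin n → Mat) :
    (List.ofFn fun v => (2 : ℝ[X]) • f v).prod = (2 : ℝ[X]) ^ n • (List.ofFn f).prod := by
  induction n with
  | zero => simp
  | succ n ih =>
    rw [List.ofFn_succ, List.prod_cons, ih, List.ofFn_succ, List.prod_cons, Matrix.smul_mul,
      Matrix.mul_smul, smul_smul, pow_succ, mul_comm]

/-- One step in spin variables: an edge copies the preceding spin when its coin shows `true`. -/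
def sst {n : ℕ} (s0 : Bool) (c : Fin n → Bool) (s : Fin n → Bool) : Fin n → Bool :=
  fun v => if c v then prv s0 s v else s v

/-- The coin average of the generating polynomial is the trace of the averaged chain: coins act on
separate factors. -/
theorem sum_PP {n : ℕ} (s0 : Bool) (s : Fin n → Bool) :
    ∑ c : Fin n → Bool, PP (List.ofFn (sst s0 c s)) =
      (2 : ℝ[X]) ^ n * (chV s0 (List.ofFn s) * flipM).trace := by
  have h : ∑ c : Fin n → Bool, PM (List.ofFn (sst s0 c s)) =
      (2 : ℝ[X]) ^ n • chV s0 (List.ofFn s) := by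
    rw [chV_ofFn, ← prod_ofFn_smul]
    have e : ∀ v, (2 : ℝ[X]) • (1 + y • (Y (prv s0 s v) + Y (s v))) =
        U (prv s0 s v) X + U (s v) X := by
      intro v
      have h2 : (2 : ℝ[X]) * y = X := by
        rw [y, ← mul_assoc, show (2 : ℝ[X]) = C 2 from rfl, ← C_mul]; norm_num
      generalize prv s0 s v = a
      generalize s v = b
      cases a <;> cases b <;> ext i j : 1 <;> fin_cases i <;> fin_cases j <;>
        simp [U, Y, mul_add, h2] <;> norm_num
    simp only [e]
    rw [← sum_prod_ofFn]
    refine Finset.sum_congr rfl fun c _ => ?_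
    rw [PM, List.map_ofFn]
    congr 2
    funext v
    simp only [Function.comp, sst]
    split_ifs <;> rfl
  simp only [PP]
  rw [← Matrix.trace_sum, ← Finset.sum_mul, h, Matrix.smul_mul, Matrix.trace_smul, smul_eq_mul]

section Cycle
variable {N : ℕ} [NeZero N]

/-- The last edge of the cycle. -/
def lastE (N : ℕ) [NeZero N] : Fin N := ⟨N - 1, by have := NeZero.pos N; omega⟩

/-- The antiperiodic predecessor spin on the cycle. -/
def prev (s : Fin N → Bool) : Fin N → Bool := prv (!s (lastE N)) s

/-- Tokens sit where a spin differs from its antiperiodic predecessor. -/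
def tokens (s : Fin N → Bool) : Finset (Fin N) := Finset.univ.filter fun v => s v ≠ prev s v

/-- One step of the spin dynamics on the cycle. -/
def sstep (c : Fin N → Bool) (s : Fin N → Bool) : Fin N → Bool := sst (!s (lastE N)) c s

/-- The cyclic predecessor of a node. -/
def pn (w : Fin N) : Fin N := if h : w.val = 0 then lastE N else ⟨w.val - 1, by omega⟩

theorem prev_eq (s : Fin N → Bool) (w : Fin N) :
    prev s w = xor (s (pn w)) (decide (w.val = 0)) := by
  unfold prev prv pn
  split_ifs with h <;> simp [h]

theorem add_one_eq_iff (v w : Fin N) : v + 1 = w ↔ v = pn w := by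
  have hN := NeZero.pos N
  rw [Fin.ext_iff, Fin.ext_iff, Fin.val_add]
  unfold pn
  have hv := v.2
  have hw := w.2
  rcases Nat.lt_or_ge 1 N with h1 | h1
  · have : ((1 : Fin N) : ℕ) = 1 := by
      rw [Fin.val_one']; exact Nat.mod_eq_of_lt h1
    rw [this]
    rcases Nat.lt_or_ge (v.val + 1) N with h2 | h2
    · rw [Nat.mod_eq_of_lt h2]
      split_ifs with h <;> simp [lastE] <;> omega
    · have h3 : v.val + 1 = N := by omega
      rw [h3, Nat.mod_self]
      split_ifs with h <;> simp [lastE] <;> omega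
  · have : N = 1 := by omega
    subst this
    simp [lastE]

theorem pn_ne (h : 2 ≤ N) (w : Fin N) : pn w ≠ w := by
  intro e
  rw [Fin.ext_iff] at e
  unfold pn at e
  split_ifs at e with h1 <;> simp [lastE] at e <;> omega

/-- The spin dynamics induces the protocol on tokens. A token lands on `w` either by staying at
`w` or by moving from the predecessor, so `w` is occupied afterwards iff exactly one of the two
happens, which is the exclusive or computed by the spins. -/
theorem tokens_sstep (h : 2 ≤ N) (c s : Fin N → Bool) :
    tokens (sstep c s) = step N c (tokens s) := by
  ext w
  have hT : ∀ v, v ∈ tokens s ↔ xor (s v) (prev s v) = true := by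
    intro v; simp [tokens]
  have hset : ((tokens s).filter fun v => (if c v then v + 1 else v) = w) =
      (if (!c w && xor (s w) (prev s w)) then {w} else ∅) ∪
      (if (c (pn w) && xor (s (pn w)) (prev s (pn w))) then {pn w} else ∅) := by
    ext v
    rw [Finset.mem_filter, hT, Finset.mem_union]
    by_cases hc : c v
    · rw [if_pos hc, add_one_eq_iff]
      constructor
      · rintro ⟨h1, rfl⟩; right; simp [hc, h1]
      · rintro (h1 | h1)
        · split_ifs at h1 with h2
          · obtain rfl := Finset.mem_singleton.1 h1
            simp [hc] at h2
          · simp at h1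
        · split_ifs at h1 with h2
          · obtain rfl := Finset.mem_singleton.1 h1
            simp only [Bool.and_eq_true] at h2
            exact ⟨h2.2, rfl⟩
          · simp at h1
    · rw [if_neg hc]
      constructor
      · rintro ⟨h1, rfl⟩; left; simp [hc, h1]
      · rintro (h1 | h1)
        · split_ifs at h1 with h2
          · obtain rfl := Finset.mem_singleton.1 h1
            simp only [Bool.and_eq_true] at h2
            exact ⟨h2.2, rfl⟩
          · simp at h1
        · split_ifs at h1 with h2
          · obtain rfl := Finset.mem_singleton.1 h1
            simp [hc] at h2
          · simp at h1
  have e1 : sstep c s w = if c w then prev s w else s w := rfl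
  have e2 : sstep c s (pn w) = if c (pn w) then prev s (pn w) else s (pn w) := rfl
  have hl : w ∈ tokens (sstep c s) ↔
      xor (!c w && xor (s w) (prev s w)) (c (pn w) && xor (s (pn w)) (prev s (pn w))) = true := by
    have : w ∈ tokens (sstep c s) ↔ xor (sstep c s w) (prev (sstep c s) w) = true := by
      simp [tokens]
    rw [this, prev_eq (sstep c s), e1, e2, prev_eq s w]
    generalize prev s (pn w) = p
    generalize s (pn w) = q
    generalize c w = a
    generalize c (pn w) = b
    generalize s w = r
    generalize decide (w.val = 0) = z
    revert p q a b r z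
    decide
  rw [hl, step, Finset.mem_filter, hset]
  have hne := pn_ne h w
  generalize (!c w && xor (s w) (prev s w)) = A
  generalize (c (pn w) && xor (s (pn w)) (prev s (pn w))) = B
  have : ({w, pn w} : Finset (Fin N)).card = 2 := Finset.card_pair hne.symm
  cases A <;> cases B <;> simp [this]

/-- The number of tokens is the number of antiperiodic spin changes. -/
theorem chK_tokens (s : Fin N → Bool) :
    chK (!s (lastE N)) (List.ofFn s) = (tokens s).card := by
  rw [chK_ofFn, tokens, Finset.card_filter]
  refine Finset.sum_congr rfl fun v _ => ?_
  rw [prev]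
  by_cases h : prv (!s (lastE N)) s v = s v
  · simp [h]
  · rw [if_neg h, if_pos (Ne.symm h)]

theorem getLastD_ofFn (s : Fin N → Bool) (b : Bool) : (List.ofFn s).getLastD b = s (lastE N) := by
  have hN := NeZero.pos N
  have hne : List.ofFn s ≠ [] := by
    intro h
    have := congrArg List.length h
    simp at this; omega
  rw [List.getLastD_eq_getLast?, List.getLast?_eq_getLast_of_ne_nil hne, Option.getD_some,
    List.getLast_ofFn]
  rfl

theorem tokens_odd (s : Fin N → Bool) : Odd (tokens s).card := by
  rw [← chK_tokens, chK_odd, getLastD_ofFn]; simp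

/-- Spins determined by counting tokens from node `0`. -/
def spin (x : Finset (Fin N)) : Fin N → Bool := fun v => decide (Odd (x.filter fun u => u ≤ v).card)

theorem tokens_spin (x : Finset (Fin N)) (hx : Odd x.card) : tokens (spin x) = x := by
  ext v
  rw [tokens, Finset.mem_filter, and_iff_right (Finset.mem_univ _), prev]
  by_cases h : v.val = 0
  · have e : prv (!spin x (lastE N)) (spin x) v = false := by
      rw [prv, dif_pos h]
      have : (x.filter fun u => u ≤ lastE N) = x := by
        apply Finset.filter_true_of_mem
        intro u _
        rw [Fin.le_def]; have := u.2; simp [lastE]; omega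
      simp [spin, this, hx]
    rw [e]
    have : (x.filter fun u => u ≤ v) = if v ∈ x then {v} else ∅ := by
      ext u
      have : u ≤ v ↔ u = v := by rw [Fin.le_def, Fin.ext_iff]; omega
      rw [Finset.mem_filter, this]
      split_ifs with hv
      · simp; rintro rfl; exact hv
      · simp; rintro hu rfl; exact hv hu
    simp only [spin, this]
    split_ifs with hv <;> simp [hv]
  · rw [prv, dif_neg h]
    set u : Fin N := ⟨v.val - 1, by omega⟩ with hu
    have hle : ∀ w : Fin N, w ≤ v ↔ w ≤ u ∨ w = v := by
      intro w; rw [Fin.le_def, Fin.le_def, Fin.ext_iff]; simp [hu]; omega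
    have hnot : ¬ v ≤ u := by rw [Fin.le_def]; have : u.val = v.val - 1 := rfl; omega
    have : (x.filter fun w => w ≤ v) = if v ∈ x then insert v (x.filter fun w => w ≤ u)
        else x.filter fun w => w ≤ u := by
      ext w
      rw [Finset.mem_filter, hle]
      split_ifs with hv
      · simp only [Finset.mem_insert, Finset.mem_filter]
        constructor
        · rintro ⟨h1, h2 | h2⟩
          · exact Or.inr ⟨h1, h2⟩
          · exact Or.inl h2
        · rintro (rfl | ⟨h1, h2⟩)
          · exact ⟨hv, Or.inr rfl⟩
          · exact ⟨h1, Or.inl h2⟩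
      · simp only [Finset.mem_filter]
        constructor
        · rintro ⟨h1, h2 | rfl⟩
          · exact ⟨h1, h2⟩
          · exact absurd h1 hv
        · rintro ⟨h1, h2⟩; exact ⟨h1, Or.inl h2⟩
    simp only [spin, this]
    split_ifs with hv
    · rw [Finset.card_insert_of_notMem (by simp [hnot])]
      simp only [hv, iff_true, ne_eq, decide_eq_decide, Nat.odd_add_one]
      tauto
    · simp [hv]

theorem step_card_le (c : Fin N → Bool) (S : Finset (Fin N)) : (step N c S).card ≤ S.card := by
  refine (Finset.card_le_card (t := S.image fun v => if c v then v + 1 else v) ?_).trans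
    Finset.card_image_le
  intro w hw
  rw [step, Finset.mem_filter] at hw
  obtain ⟨v, hv⟩ := Finset.card_pos.1 (by rw [hw.2]; norm_num)
  rw [Finset.mem_filter] at hv
  exact Finset.mem_image.2 ⟨v, hv⟩

/-- The cubic token statistic: the coefficient of `X ^ 3` in `PP`. -/
noncomputable def F3 (s : Fin N → Bool) : ℝ := (PP (List.ofFn s)).coeff 3
/-- The quintic token statistic: the coefficient of `X ^ 5` in `PP`. -/
noncomputable def F5 (s : Fin N → Bool) : ℝ := (PP (List.ofFn s)).coeff 5

theorem sum_coeff (s : Fin N → Bool) (k : ℕ) :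
    ∑ c : Fin N → Bool, (PP (List.ofFn (sstep c s))).coeff k =
      2 ^ N * (chV (!s (lastE N)) (List.ofFn s) * flipM).trace.coeff k := by
  rw [← finsetSum_coeff]
  have := sum_PP (!s (lastE N)) s
  simp only [sstep]
  rw [this, show (2 : ℝ[X]) ^ N = C ((2 : ℝ) ^ N) by rw [C_pow]; rfl, coeff_C_mul]

/-- The mean of `F₃` after one step is `F₃ - (K - 1) N / 8`. -/
theorem sum_F3 (s : Fin N → Bool) : ∑ c, F3 (sstep c s) =
    2 ^ N * (F3 s - (((tokens s).card : ℝ) - 1) / 8 * N) := by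
  have h := chV_coeff3 (!s (lastE N)) (List.ofFn s) (by rw [getLastD_ofFn]; simp)
  rw [chK_tokens, PP_coeff1, List.length_ofFn] at h
  simp only [F3]
  rw [sum_coeff, h]

/-- The mean of `F₅` after one step is at least `F₅ - (K - 3) F₃ / 8`. -/
theorem sum_F5 (s : Fin N → Bool) :
    2 ^ N * (F5 s - (((tokens s).card : ℝ) - 3) / 8 * F3 s) ≤ ∑ c, F5 (sstep c s) := by
  have h := chV_coeff5 (!s (lastE N)) (List.ofFn s) (by rw [getLastD_ofFn]; simp)
  rw [chK_tokens] at h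
  simp only [F3, F5]
  rw [sum_coeff]
  exact mul_le_mul_of_nonneg_left h (by positivity)

end Cycle

/-! ### Survival probabilities and potentials -/

section Time
variable {N : ℕ} [NeZero N]

theorem conf_succ (x : Finset (Fin N)) (ω : ℕ → Fin N → Bool) (t : ℕ) :
    conf N x ω (t + 1) = conf N (step N (ω 0) x) (fun i => ω (i + 1)) t := by
  induction t with
  | zero => rfl
  | succ t ih => rw [conf, ih]; rfl

theorem pad_cons (t : ℕ) (c : Fin N → Bool) (ω : Fin t → Fin N → Bool) :
    pad N (t + 1) (Fin.cons c ω) 0 = c ∧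
      (fun i => pad N (t + 1) (Fin.cons c ω) (i + 1)) = pad N t ω := by
  constructor
  · simp [pad]
  · funext i
    unfold pad
    by_cases h : i < t
    · rw [dif_pos h, dif_pos (by omega)]
      exact Fin.cons_succ (α := fun _ => Fin N → Bool) c ω ⟨i, h⟩
    · rw [dif_neg h, dif_neg (by omega)]

theorem survival_succ (x : Finset (Fin N)) (t : ℕ) :
    survival N x (t + 1) = (∑ c, survival N (step N c x) t) / 2 ^ N := by
  have h : ((Finset.univ.filter fun ω : Fin (t + 1) → Fin N → Bool =>
      (conf N x (pad N (t + 1) ω) (t + 1)).card ≠ 1).card : ℝ) =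
      ∑ c : Fin N → Bool, ((Finset.univ.filter fun ω : Fin t → Fin N → Bool =>
      (conf N (step N c x) (pad N t ω) t).card ≠ 1).card : ℝ) := by
    simp only [Finset.card_filter]
    push_cast
    rw [← (Fin.consEquiv fun _ => Fin N → Bool).sum_comp, Fintype.sum_prod_type]
    refine Finset.sum_congr rfl fun c _ => Finset.sum_congr rfl fun ω _ => ?_
    change (if (conf N x (pad N (t + 1) (Fin.cons c ω)) (t + 1)).card ≠ 1 then (1 : ℝ) else 0) = _
    rw [conf_succ, (pad_cons t c ω).1, (pad_cons t c ω).2]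
  simp only [survival]
  rw [h, ← Finset.sum_div, div_div, ← pow_add]
  congr 2
  ring

theorem survival_zero (x : Finset (Fin N)) :
    survival N x 0 = if x.card = 1 then 0 else 1 := by
  have : ∀ ω : Fin 0 → Fin N → Bool, conf N x (pad N 0 ω) 0 = x := fun ω => rfl
  simp only [survival, this]
  split_ifs with h <;> simp [h]

theorem survival_nonneg (x : Finset (Fin N)) (t : ℕ) : 0 ≤ survival N x t := by
  unfold survival; positivity

/-- Survival probability of the configuration encoded by a spin vector. -/
noncomputable def sv (s : Fin N → Bool) (t : ℕ) : ℝ := survival N (tokens s) t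

theorem sv_succ (hN : 2 ≤ N) (s : Fin N → Bool) (t : ℕ) :
    sv s (t + 1) = (∑ c, sv (sstep c s) t) / 2 ^ N := by
  simp only [sv, tokens_sstep hN, survival_succ]

theorem sum_sv_succ (hN : 2 ≤ N) (s : Fin N → Bool) (n : ℕ) :
    ∑ t ∈ Finset.range (n + 1), sv s t =
      (∑ c, ∑ t ∈ Finset.range n, sv (sstep c s) t) / 2 ^ N + sv s 0 := by
  rw [Finset.sum_range_succ', Finset.sum_comm, Finset.sum_div]
  simp only [sv_succ hN]

/-- A potential dropping on average by at least one while not stabilised bounds truncated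
expected times from above. -/
theorem drift_upper (hN : 2 ≤ N) (V : (Fin N → Bool) → ℝ) (A : ℝ)
    (hbase : ∀ s, 0 ≤ V s + A * sv s 0)
    (hstep : ∀ s, (∑ c, V (sstep c s)) / 2 ^ N ≤ V s - sv s 0) (n : ℕ) (s : Fin N → Bool) :
    ∑ t ∈ Finset.range n, sv s t ≤ V s + A * sv s n := by
  induction n generalizing s with
  | zero => simpa using hbase s
  | succ n ih =>
    rw [sum_sv_succ hN, sv_succ hN]
    have h1 : (∑ c, ∑ t ∈ Finset.range n, sv (sstep c s) t) / 2 ^ N ≤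
        (∑ c, (V (sstep c s) + A * sv (sstep c s) n)) / 2 ^ N :=
      div_le_div_of_nonneg_right (Finset.sum_le_sum fun c _ => ih _) (by positivity)
    rw [Finset.sum_add_distrib, ← Finset.mul_sum, add_div, mul_div_assoc] at h1
    linarith [hstep s]

/-- The reverse estimate on the states with at most three tokens, a set closed under the dynamics.
-/
theorem drift_lower (hN : 2 ≤ N) (V : (Fin N → Bool) → ℝ) (A : ℝ)
    (hbase : ∀ s, V s ≤ A * sv s 0)
    (hstep : ∀ s, (tokens s).card ≤ 3 → V s - sv s 0 ≤ (∑ c, V (sstep c s)) / 2 ^ N) (n : ℕ)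
    (s : Fin N → Bool) (hs : (tokens s).card ≤ 3) :
    V s - A * sv s n ≤ ∑ t ∈ Finset.range n, sv s t := by
  induction n generalizing s with
  | zero => simpa using hbase s
  | succ n ih =>
    rw [sum_sv_succ hN, sv_succ hN]
    have h1 : (∑ c, (V (sstep c s) - A * sv (sstep c s) n)) / 2 ^ N ≤
        (∑ c, ∑ t ∈ Finset.range n, sv (sstep c s) t) / 2 ^ N :=
      div_le_div_of_nonneg_right (Finset.sum_le_sum fun c _ => ih _ (by
        rw [tokens_sstep hN]; exact (step_card_le _ _).trans hs)) (by positivity)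
    rw [Finset.sum_sub_distrib, ← Finset.mul_sum, sub_div, mul_div_assoc] at h1
    linarith [hstep s hs]

theorem sv_zero (s : Fin N → Bool) : sv s 0 = if (tokens s).card = 1 then 0 else 1 :=
  survival_zero _

theorem F3_nonneg (s : Fin N → Bool) : 0 ≤ F3 s := NN_PP _ 3

theorem F_one {s : Fin N → Bool} (h : (tokens s).card = 1) : F3 s = 0 ∧ F5 s = 0 :=
  PP_chK_one (!s (lastE N)) _ (by rw [chK_tokens, h])

theorem F3_le (s : Fin N → Bool) : 24 * F3 s ≤ (N : ℝ) ^ 3 - N := by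
  have := PP_coeff3_le (List.ofFn s)
  rwa [List.length_ofFn] at this

theorem F_bound (s : Fin N → Bool) : (N : ℝ) ^ 2 * F3 s - 24 * F5 s ≤ (N : ℝ) ^ 5 / 27 := by
  have := PP_bound (List.ofFn s)
  rwa [List.length_ofFn] at this

theorem N_pos : (0 : ℝ) < N := by exact_mod_cast NeZero.pos N

theorem card_cases (s : Fin N → Bool) :
    (tokens s).card = 1 ∨ (tokens s).card = 3 ∨ 5 ≤ (tokens s).card := by
  obtain ⟨k, hk⟩ := tokens_odd s
  omega

/-- The cubic potential: it drops on average by `(K - 1) / 2`, hence by exactly one for `K = 3`. -/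
noncomputable def V0 (s : Fin N → Bool) : ℝ := 4 / N * F3 s

theorem avg_V0 (s : Fin N → Bool) :
    (∑ c, V0 (sstep c s)) / 2 ^ N = V0 s - (((tokens s).card : ℝ) - 1) / 2 := by
  have hN := N_pos (N := N)
  simp only [V0]
  rw [← Finset.mul_sum, sum_F3]
  field_simp
  ring

/-- The corrected potential, for which the sharp gap inequality gives the bound `4 N ^ 2 / 27`. It
drops on average by at least one while there is more than one token, strictly so from five on. -/
noncomputable def V1 (s : Fin N → Bool) : ℝ := 4 / N * (F3 s - 24 / N ^ 2 * F5 s)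

theorem avg_V1 (s : Fin N → Bool) :
    (∑ c, V1 (sstep c s)) / 2 ^ N ≤ V1 s - (((tokens s).card : ℝ) - 1) / 2
      + (((tokens s).card : ℝ) - 3) / 2 * (24 * F3 s / N ^ 3) := by
  have hN := N_pos (N := N)
  simp only [V1]
  rw [← Finset.mul_sum, Finset.sum_sub_distrib, ← Finset.mul_sum, sum_F3]
  have h5 := sum_F5 s
  set K : ℝ := ((tokens s).card : ℝ)
  have e : (4 : ℝ) / N * (F3 s - 24 / N ^ 2 * F5 s) - (K - 1) / 2 + (K - 3) / 2 * (24 * F3 s / N ^ 3)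
      = 4 / N * (2 ^ N * (F3 s - (K - 1) / 8 * N) - 24 / N ^ 2 * (2 ^ N * (F5 s - (K - 3) / 8 * F3 s)))
        / 2 ^ N := by
    field_simp
    ring
  rw [e]
  gcongr

theorem sum_abs_bound (V : (Fin N → Bool) → ℝ) (s : Fin N → Bool) : |V s| ≤ ∑ s' : Fin N → Bool, |V s'| :=
  Finset.single_le_sum (f := fun s' => |V s'|) (fun _ _ => abs_nonneg _) (Finset.mem_univ s)

theorem sum_sv_le_V0 (hN : 2 ≤ N) (s : Fin N → Bool) (n : ℕ) :
    ∑ t ∈ Finset.range n, sv s t ≤ V0 s := by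
  have hp := N_pos (N := N)
  have := drift_upper hN V0 0 (fun s => by
      rw [zero_mul, add_zero]; exact mul_nonneg (by positivity) (F3_nonneg s)) (fun s => by
    rw [avg_V0, sv_zero]
    rcases card_cases s with h | h | h
    · simp [h]
    · rw [h]; norm_num
    · rw [if_neg (by omega)]
      have : (5 : ℝ) ≤ (tokens s).card := by exact_mod_cast h
      linarith) n s
  simpa using this

theorem sv_summable (hN : 2 ≤ N) (s : Fin N → Bool) : Summable (sv s) :=
  summable_of_sum_range_le (fun _ => survival_nonneg _ _) (sum_sv_le_V0 hN s)

/-- Expected stabilisation time of an encoded configuration. -/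
noncomputable def ev (s : Fin N → Bool) : ℝ := ∑' t, sv s t

theorem ev_succ (hN : 2 ≤ N) (s : Fin N → Bool) :
    ev s = sv s 0 + (∑ c, ev (sstep c s)) / 2 ^ N := by
  rw [ev, (sv_summable hN s).tsum_eq_zero_add]
  simp only [sv_succ hN, ev]
  rw [tsum_div_const, Summable.tsum_finsetSum fun c _ => sv_summable hN _]

theorem heavy_factor (s : Fin N → Bool) : 24 * F3 s / N ^ 3 < 1 := by
  have hp := N_pos (N := N)
  rw [div_lt_one (by positivity)]
  linarith [F3_le s]

theorem ev_le (hN : 2 ≤ N) (s : Fin N → Bool) : ev s ≤ V1 s := by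
  have hp := N_pos (N := N)
  have hup := fun n => drift_upper hN V1 (∑ s' : Fin N → Bool, |V1 s'|) (fun s => by
    rw [sv_zero]
    split_ifs with h
    · simp [V1, F_one h]
    · have := sum_abs_bound V1 s
      have := neg_abs_le (V1 s)
      linarith) (fun s => by
    refine (avg_V1 s).trans ?_
    rw [sv_zero]
    rcases card_cases s with h | h | h
    · have := F3_nonneg s
      simp [h, F_one h]
    · rw [h]; norm_num
    · rw [if_neg (by omega)]
      have h5 : (5 : ℝ) ≤ (tokens s).card := by exact_mod_cast h
      nlinarith [heavy_factor s]) n s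
  have ht := (sv_summable hN s).hasSum.tendsto_sum_nat
  have h0 := (sv_summable hN s).tendsto_atTop_zero
  have h1 : Filter.Tendsto (fun n => V1 s + (∑ s' : Fin N → Bool, |V1 s'|) * sv s n) Filter.atTop
      (nhds (V1 s + (∑ s' : Fin N → Bool, |V1 s'|) * 0)) := tendsto_const_nhds.add (h0.const_mul _)
  rw [mul_zero, add_zero] at h1
  exact le_of_tendsto_of_tendsto' ht h1 hup

theorem V1_le (s : Fin N → Bool) : V1 s ≤ 4 / 27 * (N : ℝ) ^ 2 := by
  have hp := N_pos (N := N)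
  have e : V1 s = 4 / N ^ 3 * ((N : ℝ) ^ 2 * F3 s - 24 * F5 s) := by
    rw [V1]; field_simp
  have e2 : 4 / 27 * (N : ℝ) ^ 2 = 4 / N ^ 3 * ((N : ℝ) ^ 5 / 27) := by field_simp
  rw [e, e2]
  exact mul_le_mul_of_nonneg_left (F_bound s) (by positivity)

/-- With five or more tokens the first step of the drift estimate is already strict. -/
theorem ev_lt_of_five (hN : 2 ≤ N) (s : Fin N → Bool) (h : 5 ≤ (tokens s).card) :
    ev s < 4 / 27 * (N : ℝ) ^ 2 := by
  have h1 : (∑ c, ev (sstep c s)) / 2 ^ N ≤ (∑ c, V1 (sstep c s)) / 2 ^ N :=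
    div_le_div_of_nonneg_right (Finset.sum_le_sum fun c _ => ev_le hN _) (by positivity)
  have h2 := avg_V1 s
  have h5 : (5 : ℝ) ≤ (tokens s).card := by exact_mod_cast h
  have h3 := heavy_factor s
  rw [ev_succ hN, sv_zero, if_neg (by omega)]
  have := V1_le s
  nlinarith

theorem ev_three (hN : 2 ≤ N) (s : Fin N → Bool) (h : (tokens s).card = 3) : ev s = V0 s := by
  apply le_antisymm
  · exact le_of_tendsto' (sv_summable hN s).hasSum.tendsto_sum_nat (sum_sv_le_V0 hN s)
  · have hlow := fun n => drift_lower hN V0 (∑ s' : Fin N → Bool, |V0 s'|) (fun s => by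
      rw [sv_zero]
      split_ifs with h
      · simp [V0, F_one h]
      · have := sum_abs_bound V0 s
        have := le_abs_self (V0 s)
        linarith) (fun s hs => by
      rw [avg_V0, sv_zero]
      rcases card_cases s with h | h | h
      · simp [h]
      · rw [h]; norm_num
      · omega) n s h.le
    have ht := (sv_summable hN s).hasSum.tendsto_sum_nat
    have h0 := (sv_summable hN s).tendsto_atTop_zero
    have h1 : Filter.Tendsto (fun n => V0 s - (∑ s' : Fin N → Bool, |V0 s'|) * sv s n) Filter.atTop
        (nhds (V0 s - (∑ s' : Fin N → Bool, |V0 s'|) * 0)) := tendsto_const_nhds.sub (h0.const_mul _)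
    rw [mul_zero, sub_zero] at h1
    exact le_of_tendsto_of_tendsto' h1 ht hlow

theorem ev_one (hN : 2 ≤ N) (s : Fin N → Bool) (h : (tokens s).card = 1) : ev s ≤ 0 := by
  refine (ev_le hN s).trans ?_
  simp [V1, F_one h]

theorem expT_eq (x : Finset (Fin N)) (hx : Odd x.card) : expT N x = ev (spin x) := by
  simp only [expT, ev, sv, tokens_spin x hx]

/-- The spins of a three-token configuration are constant between consecutive tokens. -/
theorem ofFn_spin_three {p₁ p₂ p₃ : Fin N} (h12 : p₁ < p₂) (h23 : p₂ < p₃) :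
    List.ofFn (spin ({p₁, p₂, p₃} : Finset (Fin N))) =
      List.replicate p₁.val false ++ List.replicate (p₂.val - p₁.val) true ++
      List.replicate (p₃.val - p₂.val) false ++ List.replicate (N - p₃.val) true := by
  rw [Fin.lt_def] at h12 h23
  have h3 := p₃.2
  apply List.ext_getElem
  · simp; omega
  · intro i h1 h2
    have hi : i < N := by simpa using h1
    rw [List.getElem_ofFn]
    simp only [List.getElem_append, List.getElem_replicate, List.length_append,
      List.length_replicate]
    have hne1 : p₁ ≠ p₂ := by rw [Ne, Fin.ext_iff]; omega
    have hne2 : p₁ ≠ p₃ := by rw [Ne, Fin.ext_iff]; omega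
    have hne3 : p₂ ≠ p₃ := by rw [Ne, Fin.ext_iff]; omega
    have hcard : (({p₁, p₂, p₃} : Finset (Fin N)).filter fun u => u ≤ ⟨i, hi⟩).card =
        (if p₁.val ≤ i then 1 else 0) + (if p₂.val ≤ i then 1 else 0) +
          (if p₃.val ≤ i then 1 else 0) := by
      rw [Finset.card_filter, Finset.sum_insert (by simp [hne1, hne2]),
        Finset.sum_insert (by simp [hne3]), Finset.sum_singleton]
      simp only [Fin.le_def]; ring
    simp only [spin, hcard]
    split_ifs <;> first | omega | decide

theorem F3_three {p₁ p₂ p₃ : Fin N} (h12 : p₁ < p₂) (h23 : p₂ < p₃) :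
    F3 (spin ({p₁, p₂, p₃} : Finset (Fin N))) =
      ((p₂ : ℝ) - p₁) * ((p₃ : ℝ) - p₂) * ((N : ℝ) - (p₃ - p₁)) := by
  rw [F3, ofFn_spin_three h12 h23, PP_three]
  rw [Fin.lt_def] at h12 h23
  have h3 := p₃.2
  rw [Nat.cast_sub (by omega), Nat.cast_sub (by omega), Nat.cast_sub (by omega)]
  ring

theorem exists_ordered_three {x : Finset (Fin N)} (h : x.card = 3) :
    ∃ p₁ p₂ p₃ : Fin N, p₁ < p₂ ∧ p₂ < p₃ ∧ x = {p₁, p₂, p₃} := by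
  refine ⟨x.orderEmbOfFin h 0, x.orderEmbOfFin h 1, x.orderEmbOfFin h 2, by simp, by simp, ?_⟩
  ext v
  have := congrArg (fun S : Set (Fin N) => v ∈ S) (Finset.range_orderEmbOfFin x h)
  simp only [Set.mem_range, Fin.exists_fin_succ] at this
  simp at this ⊢
  rw [← this]
  simp [eq_comm]

/-- Equality case of the arithmetic-geometric inequality for three positive reals. -/
theorem amgm3_eq {a b c : ℝ} (ha : 0 < a) (hb : 0 < b) (hc : 0 < c)
    (h : 27 * (a * b * c) = (a + b + c) ^ 3) : a = b ∧ b = c := by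
  have k : a * (b - c) ^ 2 + b * (a - c) ^ 2 + c * (a - b) ^ 2 ≤ 0 := by
    nlinarith [mul_nonneg ((ha.le.trans (le_add_of_nonneg_right hb.le)).trans
      (le_add_of_nonneg_right hc.le))
      (add_nonneg (add_nonneg (sq_nonneg (a - b)) (sq_nonneg (b - c))) (sq_nonneg (a - c)))]
  have k1 := mul_nonneg ha.le (sq_nonneg (b - c))
  have k2 := mul_nonneg hb.le (sq_nonneg (a - c))
  have k3 := mul_nonneg hc.le (sq_nonneg (a - b))
  have z1 : a * (b - c) ^ 2 = 0 := by linarith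
  have z3 : c * (a - b) ^ 2 = 0 := by linarith
  have y1 : (b - c) ^ 2 = 0 := (mul_eq_zero.1 z1).resolve_left ha.ne'
  have y3 : (a - b) ^ 2 = 0 := (mul_eq_zero.1 z3).resolve_left hc.ne'
  exact ⟨sub_eq_zero.1 (pow_eq_zero_iff two_ne_zero |>.1 y3),
    sub_eq_zero.1 (pow_eq_zero_iff two_ne_zero |>.1 y1)⟩

theorem expT_three (hN : 2 ≤ N) {p₁ p₂ p₃ : Fin N} (h12 : p₁ < p₂) (h23 : p₂ < p₃) :
    expT N {p₁, p₂, p₃} =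
      4 / N * (((p₂ : ℝ) - p₁) * ((p₃ : ℝ) - p₂) * ((N : ℝ) - (p₃ - p₁))) := by
  have hc : ({p₁, p₂, p₃} : Finset (Fin N)).card = 3 :=
    Finset.card_eq_three.2 ⟨p₁, p₂, p₃, h12.ne, (h12.trans h23).ne, h23.ne, rfl⟩
  have hodd : Odd ({p₁, p₂, p₃} : Finset (Fin N)).card := by rw [hc]; decide
  rw [expT_eq _ hodd, ev_three hN _ (by rw [tokens_spin _ hodd, hc]), V0, F3_three h12 h23]

end Time

end Proof

/-- **Herman protocol conjecture.** For Herman's protocol on a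
cycle of `N ≥ 3` nodes started from any configuration `x` with an odd number
of tokens, the expected stabilization time satisfies `E(T) ≤ (4/27)·N²`, with
equality if and only if `3 ∣ N` and `x` consists of exactly three tokens whose
three arc-distances all equal `N/3`. -/
theorem herman_protocol_conjecture (N : ℕ) [NeZero N] (hN : 3 ≤ N)
    (x : Finset (Fin N)) (hodd : Odd x.card) :
    expT N x ≤ 4 / 27 * (N : ℝ) ^ 2 ∧
      (expT N x = 4 / 27 * (N : ℝ) ^ 2 ↔ Equidistant3 N x) := by
  have hN2 : 2 ≤ N := by omega
  have hp := N_pos (N := N)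
  have hle : expT N x ≤ 4 / 27 * (N : ℝ) ^ 2 := by
    rw [expT_eq x hodd]; exact (ev_le hN2 _).trans (V1_le _)
  refine ⟨hle, ?_, ?_⟩
  · intro heq
    have h3 : x.card = 3 := by
      rcases card_cases (spin x) with h | h | h
      · have := ev_one hN2 _ h
        rw [← expT_eq x hodd, heq] at this
        have : 0 < 4 / 27 * (N : ℝ) ^ 2 := by positivity
        linarith
      · rwa [tokens_spin x hodd] at h
      · have := ev_lt_of_five hN2 _ h
        rw [← expT_eq x hodd, heq] at this
        exact absurd this (lt_irrefl _)
    obtain ⟨p₁, p₂, p₃, h12, h23, rfl⟩ := exists_ordered_three h3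
    rw [expT_three hN2 h12 h23] at heq
    have l12 : (p₁ : ℝ) < p₂ := by exact_mod_cast h12
    have l23 : (p₂ : ℝ) < p₃ := by exact_mod_cast h23
    have l3 : (p₃ : ℝ) < N := by exact_mod_cast p₃.2
    have l1 : (0 : ℝ) ≤ p₁ := by positivity
    have hq : 27 * (((p₂ : ℝ) - p₁) * ((p₃ : ℝ) - p₂) * ((N : ℝ) - (p₃ - p₁))) =
        (((p₂ : ℝ) - p₁) + ((p₃ : ℝ) - p₂) + ((N : ℝ) - (p₃ - p₁))) ^ 3 := by
      rw [show ((p₂ : ℝ) - p₁) + ((p₃ : ℝ) - p₂) + ((N : ℝ) - (p₃ - p₁)) = N by ring]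
      field_simp at heq
      linarith
    obtain ⟨e1, e2⟩ := amgm3_eq (by linarith) (by linarith) (by linarith) hq
    have f1 : (p₂ : ℕ) + p₂ = p₃ + p₁ := by
      have : (p₂ : ℝ) + p₂ = p₃ + p₁ := by linarith
      exact_mod_cast this
    have f2 : (p₃ : ℕ) + p₃ = N + p₁ + p₂ := by
      have : (p₃ : ℝ) + p₃ = N + p₁ + p₂ := by linarith
      exact_mod_cast this
    have h12' := Fin.lt_def.1 h12
    have h23' := Fin.lt_def.1 h23
    exact ⟨by omega, p₁, p₂, p₃, h12, h23, rfl, by omega, by omega, by omega⟩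
  · rintro ⟨⟨m, hm⟩, p₁, p₂, p₃, h12, h23, rfl, e1, e2, e3⟩
    have h12' := Fin.lt_def.1 h12
    have h23' := Fin.lt_def.1 h23
    have hdiv : N / 3 = m := by omega
    have f1 : (p₂ : ℝ) = p₁ + m := by
      have : (p₂ : ℕ) = p₁ + m := by omega
      exact_mod_cast this
    have f2 : (p₃ : ℝ) = p₂ + m := by
      have : (p₃ : ℕ) = p₂ + m := by omega
      exact_mod_cast this
    have f3 : (N : ℝ) = 3 * m := by exact_mod_cast hm
    have hm0 : (m : ℝ) ≠ 0 := by intro h; rw [h] at f3; linarith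
    rw [expT_three hN2 h12 h23, f2, f1, f3]
    field_simp
    ring

end HermanProtocol
end

section
/- Let N be a positive integer and a, b, c positive integers with a + b + c = N. Then 1 − 27abc/N³ ≥ (27/(3.6·π²))·(3 − 2cos(πa/N) − 2cos(πb/N) − 2cos(πc/N)). (The left-hand side is the normalized expected-time potential Φ of a three-token configuration with arc-distances a, b, c, and the parenthesized quantity on the right is its potential Ψ; thus Φ ≥ c₀·Ψ with c₀ = 27/(3.6π²) ≈ 0.7599.) -/
/-!
Put `a/N = 1/3 + u`, `b/N = 1/3 + v`, `c/N = 1/3 + w`, so that `u + v + w = 0`, and write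
`s = u² + v² + w²`, `e = uvw`. Then `Φ = 9s/2 - 27e`, and the addition formula for `cos (π/3 + θ)`
gives `Ψ = ∑ (1 - cos θ) + √3 ∑ sin θ`, summed over `θ = πu, πv, πw`.

* On `|θ| ≤ 2π/3` one has `1 - cos θ ≤ θ²/2 - θ⁴/32`; since `u⁴ + v⁴ + w⁴ = s²/2` when
  `u + v + w = 0`, the cosine part is at most `π²s/2 - π⁴s²/64`.
* The three angles sum to `0`, so `∑ sin θ = -4 ∏ sin (θ/2) = -(π³/2) e σ`, where `σ`, a product of
  three values of `sinc`, satisfies `1 - π²s/24 ≤ σ ≤ 1`.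

After multiplication by `27/(3.6π²) = 7.5/π²` it remains to show
`0 ≤ 3s/4 + (7.5π²/64) s² - (27 - (15√3π/4) σ) e`. This is clear for `e ≤ 0`, as
`15√3π/4 ≈ 20.4 < 27`. For `e > 0` it follows from `e ≤ s(s + 2/3)/12`, a consequence of the
discriminant inequality `54e² ≤ s³`, together with `s ≤ 2/3`.
-/

lemma nonneg_of_deriv_nonneg {f f' : ℝ → ℝ} (hf : ∀ x, HasDerivAt f (f' x) x) (h0 : f 0 = 0)
    (hf' : ∀ x, 0 ≤ x → 0 ≤ f' x) {x : ℝ} (hx : 0 ≤ x) : 0 ≤ f x := by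
  have hm : MonotoneOn f (Set.Ici 0) := by
    apply monotoneOn_of_deriv_nonneg (convex_Ici 0)
    · exact fun y _ => (hf y).continuousAt.continuousWithinAt
    · exact fun y _ => (hf y).differentiableAt.differentiableWithinAt
    · intro y hy
      rw [interior_Ici] at hy
      rw [(hf y).deriv]
      exact hf' y (le_of_lt hy)
  simpa [h0] using hm (Set.mem_Ici.2 le_rfl) (Set.mem_Ici.2 hx) hx

lemma cos_le_quartic {x : ℝ} (hx : 0 ≤ x) : Real.cos x ≤ 1 - x ^ 2 / 2 + x ^ 4 / 24 := by
  have h := nonneg_of_deriv_nonneg (f := fun x => 1 - x ^ 2 / 2 + x ^ 4 / 24 - Real.cos x)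
    (f' := fun x => -x + x ^ 3 / 6 + Real.sin x) (fun x => by
      convert! (((hasDerivAt_const x (1 : ℝ)).sub ((hasDerivAt_pow 2 x).div_const 2)).add
        ((hasDerivAt_pow 4 x).div_const 24)).sub (Real.hasDerivAt_cos x) using 1
      norm_num; ring)
    (by simp) (fun y hy => by linarith [Real.sin_ge_sub_cube hy]) hx
  linarith

lemma sin_le_quintic {x : ℝ} (hx : 0 ≤ x) : Real.sin x ≤ x - x ^ 3 / 6 + x ^ 5 / 120 := by
  have h := nonneg_of_deriv_nonneg (f := fun x => x - x ^ 3 / 6 + x ^ 5 / 120 - Real.sin x)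
    (f' := fun x => 1 - x ^ 2 / 2 + x ^ 4 / 24 - Real.cos x) (fun x => by
      convert! (((hasDerivAt_id x).sub ((hasDerivAt_pow 3 x).div_const 6)).add
        ((hasDerivAt_pow 5 x).div_const 120)).sub (Real.hasDerivAt_sin x) using 1
      norm_num; ring)
    (by simp) (fun y hy => by linarith [cos_le_quartic hy]) hx
  linarith

lemma sextic_le_cos {x : ℝ} (hx : 0 ≤ x) :
    1 - x ^ 2 / 2 + x ^ 4 / 24 - x ^ 6 / 720 ≤ Real.cos x := by
  have h := nonneg_of_deriv_nonneg
    (f := fun x => Real.cos x - (1 - x ^ 2 / 2 + x ^ 4 / 24 - x ^ 6 / 720))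
    (f' := fun x => x - x ^ 3 / 6 + x ^ 5 / 120 - Real.sin x) (fun x => by
      convert! (Real.hasDerivAt_cos x).sub
        ((((hasDerivAt_const x (1 : ℝ)).sub ((hasDerivAt_pow 2 x).div_const 2)).add
        ((hasDerivAt_pow 4 x).div_const 24)).sub ((hasDerivAt_pow 6 x).div_const 720)) using 1
      norm_num; ring)
    (by simp) (fun y hy => by linarith [sin_le_quintic hy]) hx
  linarith

/-- The range `t² ≤ 7.5` is where the sextic Taylor bound gives the coefficient
`1/32 = 1/24 - 7.5/720`; it contains `|t| ≤ 2π/3`. -/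
lemma one_sub_cos_le {t : ℝ} (ht : t ^ 2 ≤ 7.5) :
    1 - Real.cos t ≤ t ^ 2 / 2 - t ^ 4 / 32 := by
  have h := sextic_le_cos (abs_nonneg t)
  have h2 : |t| ^ 2 = t ^ 2 := sq_abs t
  have h4 : |t| ^ 4 = t ^ 4 := by rw [show |t| ^ 4 = (|t| ^ 2) ^ 2 by ring, h2]; ring
  have h6 : |t| ^ 6 = t ^ 4 * t ^ 2 := by rw [show |t| ^ 6 = (|t| ^ 2) ^ 3 by ring, h2]; ring
  rw [Real.cos_abs, h2, h4, h6] at h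
  have : t ^ 4 * t ^ 2 ≤ t ^ 4 * 7.5 := by gcongr
  linarith

lemma sin_eq_mul_sinc (t : ℝ) : Real.sin t = t * Real.sinc t := by
  by_cases h : t = 0
  · simp [h]
  · rw [Real.sinc_of_ne_zero h]; field_simp

lemma one_sub_sq_div_six_le_sinc (t : ℝ) : 1 - t ^ 2 / 6 ≤ Real.sinc t := by
  by_cases h : t = 0
  · simp [h]
  have hp : 0 < |t| := abs_pos.2 h
  have hs : Real.sinc t = Real.sinc |t| := by
    rcases abs_choice t with h | h <;> rw [h]
    rw [Real.sinc_neg]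
  rw [hs, Real.sinc_of_ne_zero hp.ne', le_div_iff₀ hp, ← sq_abs t]
  linarith [Real.sin_ge_sub_cube hp.le]

lemma one_sub_add_le_mul {p q r A B C : ℝ} (hA : 1 - p ≤ A) (hB : 1 - q ≤ B) (hC : 1 - r ≤ C)
    (hB0 : 0 ≤ B) (hA1 : A ≤ 1) (hB1 : B ≤ 1) (hC1 : C ≤ 1) :
    1 - (p + q + r) ≤ A * B * C := by
  nlinarith [mul_nonneg (sub_nonneg.2 hA1) (sub_nonneg.2 hB1),
    mul_nonneg (sub_nonneg.2 (mul_le_one₀ hA1 hB0 hB1)) (sub_nonneg.2 hC1)]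

lemma sum_sin_of_add_eq_zero {x y z : ℝ} (h : x + y + z = 0) :
    Real.sin (2 * x) + Real.sin (2 * y) + Real.sin (2 * z)
      = -4 * (Real.sin x * Real.sin y * Real.sin z) := by
  obtain rfl : z = -(x + y) := by linarith
  rw [Real.sin_two_mul, Real.sin_two_mul, Real.sin_two_mul, Real.sin_neg, Real.cos_neg,
    Real.sin_add, Real.cos_add]
  have hx := Real.sin_sq_add_cos_sq x
  have hy := Real.sin_sq_add_cos_sq y
  have hx' : Real.cos x ^ 2 = 1 - Real.sin x ^ 2 := by linarith
  have hy' : Real.cos y ^ 2 = 1 - Real.sin y ^ 2 := by linarith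
  ring_nf
  simp only [hx', hy']
  ring

/-- From `54 (uvw)² ≤ s³` with `s = u² + v² + w²`, and AM-GM in the form
`√(2s/3) ≤ (s + 2/3)/2`, which is tight at the extreme value `s = 2/3`. -/
lemma prod_le_of_add_eq_zero {u v w s : ℝ} (h : u + v + w = 0) (hs : s = u ^ 2 + v ^ 2 + w ^ 2) :
    u * v * w ≤ s * (s + 2 / 3) / 12 := by
  have hs0 : 0 ≤ s := by rw [hs]; positivity
  have hd : 54 * (u * v * w) ^ 2 ≤ s ^ 3 := by
    obtain rfl : w = -(u + v) := by linarith
    have : s ^ 3 - 54 * (u * v * -(u + v)) ^ 2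
        = 2 * ((u - v) * (2 * u + v) * (u + 2 * v)) ^ 2 := by rw [hs]; ring
    nlinarith [sq_nonneg ((u - v) * (2 * u + v) * (u + 2 * v))]
  refine le_of_sq_le_sq ?_ (by positivity)
  nlinarith [mul_nonneg (sq_nonneg s) (sq_nonneg (s - 2 / 3))]

/-- The polynomial inequality left after the trigonometric estimates; `K` stands for `15√3π/4`
and `P` for `π²`. -/
lemma final_poly {s e K P σ : ℝ} (hs0 : 0 ≤ s) (hs : s ≤ 2 / 3) (he : e ≤ s * (s + 2 / 3) / 12)
    (hK1 : 20.4 ≤ K) (hK2 : K ≤ 27) (hP1 : 9.8 ≤ P) (hP2 : P ≤ 9.872)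
    (hσ : 1 - P * s / 24 ≤ σ) (hσ0 : 0 ≤ σ) (hσ1 : σ ≤ 1) :
    0 ≤ 0.75 * s + 7.5 * P / 64 * s ^ 2 - (27 - K * σ) * e := by
  have hKσ : K * σ ≤ 27 := by nlinarith
  have hPs : 7.5 * 9.8 / 64 * s ^ 2 ≤ 7.5 * P / 64 * s ^ 2 := by gcongr
  rcases le_total e 0 with h | h
  · nlinarith [mul_nonneg (sub_nonneg.2 hKσ) (neg_nonneg.2 h), sq_nonneg s]
  · have h1 : 1 - 9.872 * s / 24 ≤ σ := by nlinarith
    have h2 : 27 - K * σ ≤ 27 - 20.4 * (1 - 9.872 * s / 24) := by nlinarith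
    have h3 : (27 - K * σ) * e ≤
        (27 - 20.4 * (1 - 9.872 * s / 24)) * (s * (s + 2 / 3) / 12) := by
      apply mul_le_mul h2 he h; linarith
    have h4 : 0 ≤ s * (0.75 + 7.5 * 9.8 / 64 * s -
        (27 - 20.4 * (1 - 9.872 * s / 24)) * ((s + 2 / 3) / 12)) := by
      apply mul_nonneg hs0
      nlinarith
    linarith

lemma cos_pi_third_add (u : ℝ) : 2 * Real.cos (Real.pi * (1 / 3 + u)) =
    Real.cos (Real.pi * u) - √3 * Real.sin (Real.pi * u) := by
  rw [show Real.pi * (1 / 3 + u) = Real.pi / 3 + Real.pi * u by ring, Real.cos_add,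
    Real.cos_pi_div_three, Real.sin_pi_div_three]
  ring

/-- The inequality in centred coordinates, for real arc proportions `1/3 + u`, `1/3 + v`,
`1/3 + w`. -/
lemma centred_ineq {u v w : ℝ} (h : u + v + w = 0) (hu : -(1 / 3) ≤ u) (hv : -(1 / 3) ≤ v)
    (hw : -(1 / 3) ≤ w) :
    7.5 / Real.pi ^ 2 * (3 - 2 * Real.cos (Real.pi * (1 / 3 + u))
      - 2 * Real.cos (Real.pi * (1 / 3 + v)) - 2 * Real.cos (Real.pi * (1 / 3 + w)))
      ≤ 1 - 27 * ((1 / 3 + u) * (1 / 3 + v) * (1 / 3 + w)) := by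
  have hπ1 := Real.pi_gt_d4
  have hπ2 := Real.pi_lt_d4
  have hP1 : 9.8 ≤ Real.pi ^ 2 := by nlinarith
  have hP2 : Real.pi ^ 2 ≤ 9.872 := by nlinarith
  have h31 : 1.732 ≤ √3 := Real.le_sqrt_of_sq_le (by norm_num)
  have h32 : √3 ≤ 1.74 := Real.sqrt_le_iff.2 (by norm_num)
  have hK1 : 20.4 ≤ 3.75 * √3 * Real.pi := by nlinarith
  have hK2 : 3.75 * √3 * Real.pi ≤ 27 := by nlinarith
  obtain ⟨s, hs⟩ : ∃ s, s = u ^ 2 + v ^ 2 + w ^ 2 := ⟨_, rfl⟩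
  have hs0 : 0 ≤ s := by rw [hs]; positivity
  have hs1 : s ≤ 2 / 3 := by
    have hw' : w = -(u + v) := by linarith
    have h1 := mul_nonneg (neg_le_iff_add_nonneg.1 hu) (neg_le_iff_add_nonneg.1 hv)
    have h2 := mul_nonneg (neg_le_iff_add_nonneg.1 hv) (neg_le_iff_add_nonneg.1 hw)
    have h3 := mul_nonneg (neg_le_iff_add_nonneg.1 hu) (neg_le_iff_add_nonneg.1 hw)
    subst hw'
    nlinarith
  have hquart : u ^ 4 + v ^ 4 + w ^ 4 = s ^ 2 / 2 := by
    obtain rfl : w = -(u + v) := by linarith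
    rw [hs]; ring
  have he := prod_le_of_add_eq_zero h hs
  have hsq : ∀ x : ℝ, -(1 / 3) ≤ x → x ≤ 2 / 3 → x ^ 2 ≤ 4 / 9 := fun x h1 h2 => by nlinarith
  have hu2 := hsq u hu (by linarith)
  have hv2 := hsq v hv (by linarith)
  have hw2 := hsq w hw (by linarith)
  have hcos : ∀ x : ℝ, x ^ 2 ≤ 4 / 9 → 1 - Real.cos (Real.pi * x) ≤
      Real.pi ^ 2 * x ^ 2 / 2 - Real.pi ^ 4 * x ^ 4 / 32 := fun x hx => by
    have := one_sub_cos_le (t := Real.pi * x) (by rw [mul_pow]; nlinarith [sq_nonneg x])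
    rwa [mul_pow, mul_pow] at this
  have hsinc0 : ∀ x : ℝ, x ^ 2 ≤ 4 / 9 → 0 ≤ Real.sinc (Real.pi / 2 * x) := fun x hx => by
    have := one_sub_sq_div_six_le_sinc (Real.pi / 2 * x)
    nlinarith [sq_nonneg x]
  obtain ⟨σ, hσ⟩ : ∃ σ, σ = Real.sinc (Real.pi / 2 * u) * Real.sinc (Real.pi / 2 * v)
    * Real.sinc (Real.pi / 2 * w) := ⟨_, rfl⟩
  have hσ0 : 0 ≤ σ := by
    rw [hσ]
    exact mul_nonneg (mul_nonneg (hsinc0 u hu2) (hsinc0 v hv2)) (hsinc0 w hw2)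
  have hσ1 : σ ≤ 1 := by
    rw [hσ]
    exact mul_le_one₀ (mul_le_one₀ (Real.sinc_le_one _) (hsinc0 v hv2) (Real.sinc_le_one _))
      (hsinc0 w hw2) (Real.sinc_le_one _)
  have hσ2 : 1 - Real.pi ^ 2 * s / 24 ≤ σ := by
    have := one_sub_add_le_mul (one_sub_sq_div_six_le_sinc (Real.pi / 2 * u))
      (one_sub_sq_div_six_le_sinc (Real.pi / 2 * v)) (one_sub_sq_div_six_le_sinc (Real.pi / 2 * w))
      (hsinc0 v hv2) (Real.sinc_le_one _) (Real.sinc_le_one _) (Real.sinc_le_one _)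
    rw [hσ]
    refine le_trans (le_of_eq ?_) this
    rw [hs]; ring
  have hsin : Real.sin (Real.pi * u) + Real.sin (Real.pi * v) + Real.sin (Real.pi * w)
      = -(Real.pi ^ 3 / 2) * (u * v * w) * σ := by
    have := sum_sin_of_add_eq_zero (x := Real.pi / 2 * u) (y := Real.pi / 2 * v)
      (z := Real.pi / 2 * w) (by rw [← mul_add, ← mul_add, h, mul_zero])
    rw [sin_eq_mul_sinc (Real.pi / 2 * u), sin_eq_mul_sinc (Real.pi / 2 * v),
      sin_eq_mul_sinc (Real.pi / 2 * w)] at this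
    have h2 : ∀ x : ℝ, 2 * (Real.pi / 2 * x) = Real.pi * x := fun x => by ring
    rw [h2, h2, h2] at this
    rw [this, hσ]; ring
  have hΨ : 3 - 2 * Real.cos (Real.pi * (1 / 3 + u))
      - 2 * Real.cos (Real.pi * (1 / 3 + v)) - 2 * Real.cos (Real.pi * (1 / 3 + w))
      ≤ Real.pi ^ 2 * s / 2 - Real.pi ^ 4 * s ^ 2 / 64
        - √3 * (Real.pi ^ 3 / 2) * (u * v * w) * σ := by
    rw [cos_pi_third_add, cos_pi_third_add, cos_pi_third_add]
    have h1 := hcos u hu2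
    have h2 := hcos v hv2
    have h3 := hcos w hw2
    have h4 : Real.pi ^ 4 * s ^ 2 / 64 = Real.pi ^ 4 * (u ^ 4 + v ^ 4 + w ^ 4) / 32 := by
      rw [hquart]; ring
    have h5 := congrArg (fun t => √3 * t) hsin
    rw [h4, hs]
    linarith
  have hfin := final_poly hs0 hs1 he hK1 hK2 hP1 hP2 hσ2 hσ0 hσ1
  have hΦ : 1 - 27 * ((1 / 3 + u) * (1 / 3 + v) * (1 / 3 + w)) = 4.5 * s - 27 * (u * v * w) := by
    obtain rfl : w = -(u + v) := by linarith
    rw [hs]; ring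
  rw [hΦ]
  refine (mul_le_mul_of_nonneg_left hΨ (by positivity)).trans ?_
  have hexp : 7.5 / Real.pi ^ 2 * (Real.pi ^ 2 * s / 2 - Real.pi ^ 4 * s ^ 2 / 64
        - √3 * (Real.pi ^ 3 / 2) * (u * v * w) * σ)
      = 3.75 * s - 7.5 * Real.pi ^ 2 / 64 * s ^ 2
        - 3.75 * √3 * Real.pi * σ * (u * v * w) := by
    have := Real.pi_ne_zero
    field_simp
    ring
  rw [hexp]
  linarith

/-- For a positive integer `N` and positive integers `a, b, c`
with `a + b + c = N`, one has
`1 − 27abc/N³ ≥ (27/(3.6π²))·(3 − 2cos(πa/N) − 2cos(πb/N) − 2cos(πc/N))`,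
i.e. `Φ ≥ c₀·Ψ` for three-token configurations with arc-distances `a, b, c`. -/
theorem phi_ge_c_psi (N a b c : ℕ) (hN : 0 < N)
    (ha : 0 < a) (hb : 0 < b) (hc : 0 < c) (habc : a + b + c = N) :
    1 - 27 * a * b * c / (N : ℝ) ^ 3
      ≥ 27 / (3.6 * Real.pi ^ 2) *
        (3 - 2 * Real.cos (Real.pi * a / N) - 2 * Real.cos (Real.pi * b / N)
          - 2 * Real.cos (Real.pi * c / N)) := by
  have hN0 : (N : ℝ) ≠ 0 := by positivity
  have hsum : (a : ℝ) + b + c = N := by exact_mod_cast habc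
  have hpos : ∀ n : ℕ, -(1 / 3 : ℝ) ≤ n / N - 1 / 3 := fun n => by
    have : (0 : ℝ) ≤ n / N := by positivity
    linarith
  have key := centred_ineq (u := a / N - 1 / 3) (v := b / N - 1 / 3) (w := c / N - 1 / 3)
    (by field_simp; linarith) (hpos a) (hpos b) (hpos c)
  simp only [add_sub_cancel, ← mul_div_assoc] at key
  rw [ge_iff_le]
  convert key using 2
  · rw [div_eq_div_iff (by positivity) (by positivity)]
    ring
  · field_simp
end

section
/- For every real number x with −1/3 ≤ x ≤ 2/3 and x ≠ 0, one has 27/8 ≤ (1 − cos(πx))/x² ≤ π²/2. -/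
/-!
By the half-angle formula `1 - cos (π x) = 2 sin² (π |x| / 2)`, and `|x| ≤ 2/3`. The upper bound is
`1 - y² / 2 ≤ cos y`. For the lower bound, `sin` is concave on `[0, π]`, so on `[0, π / 3]` it lies
above its chord, which gives `sin (π |x| / 2) ≥ (3 |x| / 2) · (√3 / 2)`; squaring yields `27 / 8`.
-/

/-- The chord bound for `sin` on `[0, π / 3]`, with the argument parametrised as `π t / 2`. -/
lemma chord_le_sin (t : ℝ) (h0 : 0 ≤ t) (h1 : t ≤ 2 / 3) :
    3 * t / 2 * (√3 / 2) ≤ Real.sin (Real.pi * t / 2) := by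
  have hpi := Real.pi_pos
  have h := strictConcaveOn_sin_Icc.concaveOn.2
    (show (0 : ℝ) ∈ Set.Icc 0 Real.pi from ⟨le_rfl, hpi.le⟩)
    (show Real.pi / 3 ∈ Set.Icc 0 Real.pi from ⟨by positivity, by linarith⟩)
    (show 0 ≤ 1 - 3 * t / 2 by linarith) (show 0 ≤ 3 * t / 2 by linarith) (by ring)
  simp only [smul_eq_mul, Real.sin_zero, Real.sin_pi_div_three, mul_zero, zero_add] at h
  rwa [show 3 * t / 2 * (Real.pi / 3) = Real.pi * t / 2 by ring] at h

/-- For every real `x` with `−1/3 ≤ x ≤ 2/3` and `x ≠ 0`,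
one has `27/8 ≤ (1 − cos(πx))/x² ≤ π²/2`. -/
theorem bounds_on_f (x : ℝ) (h₁ : -(1 / 3) ≤ x) (h₂ : x ≤ 2 / 3) (hx : x ≠ 0) :
    27 / 8 ≤ (1 - Real.cos (Real.pi * x)) / x ^ 2 ∧
      (1 - Real.cos (Real.pi * x)) / x ^ 2 ≤ Real.pi ^ 2 / 2 := by
  have hx2 : 0 < x ^ 2 := by positivity
  rw [le_div_iff₀ hx2, div_le_iff₀ hx2]
  constructor
  · have hs := chord_le_sin |x| (abs_nonneg x) (abs_le.2 ⟨by linarith, h₂⟩)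
    have hsq := pow_le_pow_left₀ (by positivity) hs 2
    have hl : (3 * |x| / 2 * (√3 / 2)) ^ 2 = 27 / 16 * x ^ 2 := by
      rw [mul_pow, div_pow, div_pow, mul_pow, sq_abs, Real.sq_sqrt (by norm_num)]
      ring
    have hc : Real.cos (Real.pi * x) = 1 - 2 * Real.sin (Real.pi * |x| / 2) ^ 2 := by
      rw [← Real.cos_abs, abs_mul, abs_of_pos Real.pi_pos,
        show Real.pi * |x| = 2 * (Real.pi * |x| / 2) by ring, Real.cos_two_mul, Real.cos_sq']
      ring_nf
    rw [hl] at hsq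
    linarith
  · have h := Real.one_sub_sq_div_two_le_cos (x := Real.pi * x)
    rw [mul_pow] at h
    linarith
end

section
/- For all real numbers u, v with |u| ≤ 0.03, |v| ≤ 0.03 and (u, v) ≠ (0, 0), one has (9/2)·(u² + v² + (u+v)²) + 27·(u²v + uv²) ≥ (9/(π² + 0.03·√3·π³))·[3 − cos(πu) − cos(πv) − cos(π(u+v)) + √3·(sin(πu)·(1 − cos(πv)) + sin(πv)·(1 − cos(πu)))]; note that 9/(π² + 0.03·√3·π³) > 27/(3.6·π²). -/
/-!
Write `S = u² + v² + (u+v)²` and `p = u v (u+v)`, so the left-hand side is `(9/2) S + 27 p`.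
The sine part of the bracket factors as
`sin x (1 - cos y) + sin y (1 - cos x) = 4 sin (x/2) sin (y/2) sin ((x+y)/2)`,
so for `x = πu`, `y = πv` it equals `(π³/2) p w` with `w ∈ [0, 1]` (`sine_part_eq`): it has the sign
of `p` and is no larger. The cosine part is at most `(π²/2) S` by `1 - cos t ≤ t²/2`.
Moreover `|p| ≤ 0.015 S` (`abs_cubic_le`).

If `p ≥ 0`, the term `27 p` may be dropped, and the sine part is absorbed by `0.03 √3 π³`.
If `p < 0`, the sine part may be dropped, and `27 |p| ≤ 0.09 · (9/2) S` is compensated by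
`1 + 0.03 √3 π ≥ 1.16`, since `0.91 · 1.16 > 1`.
-/

lemma exists_sin_eq_mul {z : ℝ} (hz : |z| ≤ Real.pi) :
    ∃ w : ℝ, 0 ≤ w ∧ w ≤ 1 ∧ Real.sin z = z * w := by
  rcases eq_or_ne z 0 with rfl | h0
  · exact ⟨0, le_rfl, zero_le_one, by simp⟩
  obtain ⟨h1, h2⟩ := abs_le.mp hz
  refine ⟨Real.sin z / z, ?_, ?_, by field_simp⟩
  · rcases lt_or_gt_of_ne h0 with h | h
    · exact div_nonneg_of_nonpos
        (Real.sin_nonpos_of_nonpos_of_neg_pi_le h.le h1) h.le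
    · exact div_nonneg (Real.sin_nonneg_of_nonneg_of_le_pi h.le h2) h.le
  · rcases lt_or_gt_of_ne h0 with h | h
    · rw [div_le_one_of_neg h]
      have := Real.sin_lt (neg_pos.mpr h)
      rw [Real.sin_neg] at this
      linarith
    · rw [div_le_one h]
      exact (Real.sin_lt h).le

lemma sine_part_factor (x y : ℝ) :
    Real.sin x * (1 - Real.cos y) + Real.sin y * (1 - Real.cos x)
      = 4 * (Real.sin (x / 2) * Real.sin (y / 2) * Real.sin ((x + y) / 2)) := by
  obtain ⟨a, rfl⟩ : ∃ a, x = 2 * a := ⟨x / 2, by ring⟩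
  obtain ⟨b, rfl⟩ : ∃ b, y = 2 * b := ⟨y / 2, by ring⟩
  rw [show 2 * a / 2 = a by ring, show 2 * b / 2 = b by ring,
    show (2 * a + 2 * b) / 2 = a + b by ring, Real.sin_add, Real.sin_two_mul, Real.sin_two_mul,
    Real.cos_two_mul, Real.cos_two_mul]
  have ha := Real.sin_sq_add_cos_sq a
  have hb := Real.sin_sq_add_cos_sq b
  linear_combination (-4 * Real.sin b * Real.cos b) * ha - 4 * Real.sin a * Real.cos a * hb

/-- The sine part has the sign of `u v (u+v)` and is dominated by its leading Taylor term. -/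
lemma sine_part_eq {u v : ℝ} (hu : |u| ≤ 1) (hv : |v| ≤ 1) :
    ∃ w : ℝ, 0 ≤ w ∧ w ≤ 1 ∧
      Real.sin (Real.pi * u) * (1 - Real.cos (Real.pi * v))
        + Real.sin (Real.pi * v) * (1 - Real.cos (Real.pi * u))
      = Real.pi ^ 3 / 2 * (u * v * (u + v)) * w := by
  have hpi := Real.pi_pos
  rw [abs_le] at hu hv
  obtain ⟨w₁, h₁, h₁', e₁⟩ := exists_sin_eq_mul (z := Real.pi * u / 2)
    (abs_le.mpr ⟨by nlinarith, by nlinarith⟩)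
  obtain ⟨w₂, h₂, h₂', e₂⟩ := exists_sin_eq_mul (z := Real.pi * v / 2)
    (abs_le.mpr ⟨by nlinarith, by nlinarith⟩)
  obtain ⟨w₃, h₃, h₃', e₃⟩ := exists_sin_eq_mul (z := (Real.pi * u + Real.pi * v) / 2)
    (abs_le.mpr ⟨by nlinarith, by nlinarith⟩)
  refine ⟨w₁ * w₂ * w₃, by positivity,
    mul_le_one₀ (mul_le_one₀ h₁' h₂ h₂') h₃ h₃', ?_⟩
  rw [sine_part_factor, e₁, e₂, e₃]
  ring

/-- One factor is bounded by `0.03`; the other two are handled by AM-GM. Pairing `u + v` with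
`u` and bounding `v` avoids the weaker bound `|u + v| ≤ 0.06`. -/
lemma abs_cubic_le {u v : ℝ} (hv : |v| ≤ 0.03) :
    |u * v * (u + v)| ≤ 0.015 * (u ^ 2 + v ^ 2 + (u + v) ^ 2) := by
  have h1 : |u * v * (u + v)| = |v| * (|u| * |u + v|) := by
    rw [abs_mul, abs_mul]; ring
  have h2 : |v| * (|u| * |u + v|) ≤ 0.03 * (|u| * |u + v|) := by gcongr
  have h3 := two_mul_le_add_sq |u| |u + v|
  rw [sq_abs, sq_abs] at h3
  rw [h1]
  nlinarith [sq_nonneg v]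

lemma sqrt_three_mul_pi_bounds :
    5.36 < Real.sqrt 3 * Real.pi ∧ Real.sqrt 3 * Real.pi < 6 := by
  have h1 : 1.73 < Real.sqrt 3 := Real.lt_sqrt_of_sq_lt (by norm_num)
  have h2 : Real.sqrt 3 < 1.74 := (Real.sqrt_lt' (by norm_num)).mpr (by norm_num)
  have h3 := Real.pi_gt_d2
  have h4 := Real.pi_lt_d2
  constructor <;> nlinarith

/-- For all real `u, v` with `|u| ≤ 0.03`, `|v| ≤ 0.03` and
`(u, v) ≠ (0, 0)`, one has
`(9/2)(u² + v² + (u+v)²) + 27(u²v + uv²)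
  ≥ (9/(π² + 0.03·√3·π³))·[3 − cos(πu) − cos(πv) − cos(π(u+v))
      + √3(sin(πu)(1−cos(πv)) + sin(πv)(1−cos(πu)))]`;
moreover `9/(π² + 0.03·√3·π³) > 27/(3.6·π²)`. -/
theorem potential_comparison_near_origin (u v : ℝ)
    (hu : |u| ≤ 0.03) (hv : |v| ≤ 0.03) (hne : (u, v) ≠ (0, 0)) :
    9 / 2 * (u ^ 2 + v ^ 2 + (u + v) ^ 2) + 27 * (u ^ 2 * v + u * v ^ 2)
        ≥ 9 / (Real.pi ^ 2 + 0.03 * Real.sqrt 3 * Real.pi ^ 3) *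
          (3 - Real.cos (Real.pi * u) - Real.cos (Real.pi * v)
            - Real.cos (Real.pi * (u + v))
            + Real.sqrt 3 * (Real.sin (Real.pi * u) * (1 - Real.cos (Real.pi * v))
              + Real.sin (Real.pi * v) * (1 - Real.cos (Real.pi * u)))) ∧
      9 / (Real.pi ^ 2 + 0.03 * Real.sqrt 3 * Real.pi ^ 3)
        > 27 / (3.6 * Real.pi ^ 2) := by
  have hpi := Real.pi_pos
  have hs : 0 ≤ Real.sqrt 3 := Real.sqrt_nonneg 3
  obtain ⟨hk1, hk2⟩ := sqrt_three_mul_pi_bounds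
  have hden : Real.pi ^ 2 + 0.03 * Real.sqrt 3 * Real.pi ^ 3
      = Real.pi ^ 2 * (1 + 0.03 * (Real.sqrt 3 * Real.pi)) := by ring
  have hpi2 : 0 < Real.pi ^ 2 := by positivity
  have hpos : 0 < Real.pi ^ 2 + 0.03 * Real.sqrt 3 * Real.pi ^ 3 := by positivity
  constructor
  · obtain ⟨w, hw0, hw1, hw⟩ := sine_part_eq (u := u) (v := v)
      (hu.trans (by norm_num)) (hv.trans (by norm_num))
    have hp := abs_le.mp (abs_cubic_le (u := u) hv)
    have c1 := Real.one_sub_sq_div_two_le_cos (x := Real.pi * u)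
    have c2 := Real.one_sub_sq_div_two_le_cos (x := Real.pi * v)
    have c3 := Real.one_sub_sq_div_two_le_cos (x := Real.pi * (u + v))
    rw [hw, ge_iff_le, div_mul_eq_mul_div, div_le_iff₀ hpos]
    have hcub : u ^ 2 * v + u * v ^ 2 = u * v * (u + v) := by ring
    rw [hcub]
    set p := u * v * (u + v)
    obtain ⟨S, hS⟩ : ∃ S, S = u ^ 2 + v ^ 2 + (u + v) ^ 2 := ⟨_, rfl⟩
    have hS0 : 0 ≤ S := by rw [hS]; positivity
    have hcos : 3 - Real.cos (Real.pi * u) - Real.cos (Real.pi * v)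
        - Real.cos (Real.pi * (u + v)) ≤ Real.pi ^ 2 / 2 * S := by
      rw [hS]; linarith
    rw [← hS] at hp ⊢
    have hA : 0 ≤ Real.sqrt 3 * Real.pi ^ 3 := by positivity
    rcases le_or_gt 0 p with h | h
    · have hpw : p * w ≤ 0.015 * S := (mul_le_of_le_one_right h hw1).trans hp.2
      have h1 := mul_le_mul_of_nonneg_left hpw hA
      have h2 : 0 ≤ p * (Real.pi ^ 2 + 0.03 * Real.sqrt 3 * Real.pi ^ 3) := by positivity
      have h3 : 0 ≤ Real.sqrt 3 * Real.pi ^ 3 * S := by positivity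
      linarith
    · have hpw : p * w ≤ 0 := mul_nonpos_of_nonpos_of_nonneg h.le hw0
      have h1 := mul_nonpos_of_nonneg_of_nonpos hA hpw
      have h2 : 9 / 2 * (0.91 * S) ≤ 9 / 2 * S + 27 * p := by linarith
      have h3 : Real.pi ^ 2 * 1.16 ≤ Real.pi ^ 2 + 0.03 * Real.sqrt 3 * Real.pi ^ 3 := by
        rw [hden]; gcongr; linarith
      have h4 := mul_le_mul h2 h3 (by positivity) (by linarith)
      have h5 : 0 ≤ Real.pi ^ 2 * S := by positivity
      linarith
  · rw [gt_iff_lt, div_lt_div_iff₀ (by positivity) hpos, hden]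
    nlinarith
end
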